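/- arXiv:2506.11296 — 3 statements merged into one kernel-verified Lean document; each statement's English description precedes it below -/
import Mathlib

section
/- Let n ∈ {2,3,...}, ϱ ≥ 1, α ∈ [1/n, 1), and ℓ ∈ (0, π/2). Then there exists a function c_0 : (0,∞) × (0,∞) → ℝ such that: (1) for all t > 0 and all x > π/2, a_0(t,x) ≥ (cos ℓ / (2ϱ)) (x/ℓ)^{2ϱ-1} (α / t^{αn}) [ E_α(t^α) − E_α(t^α(1−(ℓ/x)^{2ϱ})) + c_0(t,x) ]; and (2) for every β ∈ ℝ and every m > 0, c_0(t, m t^β) / E_α(t^α) → 0 as t → ∞. -/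
open Real MeasureTheory Filter Topology intervalIntegral

/-- The two-parameter Mittag-Leffler function `E_{α,β}(z) = ∑ z^n / Γ(αn+β)`. -/
noncomputable def ML (a b z : ℝ) : ℝ :=
  ∑' n : ℕ, z ^ n / Real.Gamma (a * n + b)

/-- The coefficient `a_0(t,x)`. -/
noncomputable def aZero (α ϱ t x : ℝ) : ℝ :=
  ∫ ξ in (0 : ℝ)..(Real.pi / (2 * x)), ML α 1 (t ^ α * (1 - ξ ^ (2 * ϱ))) * Real.cos (x * ξ)

lemma aux_gamma_pos {α : ℝ} (hα : 0 < α) (k : ℕ) : 0 < Real.Gamma (α * k + 1) :=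
  Real.Gamma_pos_of_pos (by positivity)

lemma aux_summable (n : ℕ) (hn : 2 ≤ n) (α : ℝ) (hα1 : 1 / (n : ℝ) ≤ α) (z : ℝ) (hz : 0 ≤ z) :
    Summable (fun k : ℕ => z ^ k / Real.Gamma (α * k + 1)) := by
  have hn0 : (0 : ℝ) < n := by exact_mod_cast (by omega : 0 < n)
  have hα : 0 < α := lt_of_lt_of_le (by positivity) hα1
  obtain ⟨M, hM1, hMz⟩ : ∃ M : ℝ, 1 ≤ M ∧ z ≤ M := ⟨max 1 z, le_max_left _ _, le_max_right _ _⟩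
  have hM0 : 0 < M := by linarith
  set A : ℝ := (2 * M) ^ n with hA
  have hA0 : 0 < A := by positivity
  have hs : Summable (fun k : ℕ => ((2 * M) ^ n * Real.exp A) * (1 / 2 : ℝ) ^ k) :=
    (summable_geometric_of_lt_one (by norm_num) (by norm_num)).mul_left _
  refine Summable.of_norm_bounded_eventually_nat hs ?_
  filter_upwards [eventually_ge_atTop n] with k hk
  have hG := aux_gamma_pos hα k
  rw [Real.norm_of_nonneg (by positivity)]
  set q := k / n with hq
  have hq1 : 1 ≤ q := (Nat.one_le_div_iff (by omega)).2 hk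
  have hkq : k ≤ n * q + n := by
    have := Nat.div_add_mod k n
    have := Nat.mod_lt k (by omega : 0 < n)
    rw [← hq] at *
    omega
  have hqk : n * q ≤ k := Nat.mul_div_le k n
  have h1 : (q : ℝ) ≤ α * k := by
    have h2 : (n : ℝ) * q ≤ k := by exact_mod_cast hqk
    have h3 : (1 / (n : ℝ)) * k ≤ α * k := by gcongr
    have h4 : (q : ℝ) ≤ (1 / (n : ℝ)) * k := by
      rw [one_div, inv_mul_eq_div, le_div_iff₀ hn0]; linarith
    linarith
  have hq1' : (1 : ℝ) ≤ q := by exact_mod_cast hq1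
  have h5 : (q.factorial : ℝ) ≤ Real.Gamma (α * k + 1) := by
    rw [← Real.Gamma_nat_eq_factorial]
    exact Real.Gamma_strictMonoOn_Ici.monotoneOn (by simp; linarith) (by simp; linarith) (by linarith)
  have h6 : A ^ q / q.factorial ≤ Real.exp A := Real.pow_div_factorial_le_exp A hA0.le q
  have hf : (0 : ℝ) < q.factorial := by exact_mod_cast q.factorial_pos
  have h7 : (2 * M) ^ k ≤ (2 * M) ^ n * A ^ q := by
    rw [hA, ← pow_mul, ← pow_add]
    exact pow_le_pow_right₀ (by linarith) (by omega)
  calc z ^ k / Real.Gamma (α * k + 1) ≤ M ^ k / q.factorial := by gcongr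
    _ = (2 * M) ^ k * (1 / 2) ^ k / q.factorial := by
        rw [← mul_pow]; congr 2; ring
    _ ≤ ((2 * M) ^ n * A ^ q) * (1 / 2) ^ k / q.factorial := by gcongr
    _ = (2 * M) ^ n * (A ^ q / q.factorial) * (1 / 2) ^ k := by ring
    _ ≤ _ := by gcongr

lemma aux_int (p L : ℝ) (hp : 2 ≤ p) (hL0 : 0 < L) (hL1 : L ≤ 1) (m : ℕ) :
    1 - (1 - L ^ p) ^ (m + 1) ≤
      ((m : ℝ) + 1) * (p * L ^ (p - 1)) * ∫ ξ in (0 : ℝ)..L, (1 - ξ ^ p) ^ m := by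
  have hd : ∀ ξ : ℝ, HasDerivAt (fun y : ℝ => -(1 - y ^ p) ^ (m + 1))
      (((m : ℝ) + 1) * (1 - ξ ^ p) ^ m * (p * ξ ^ (p - 1))) ξ := by
    intro ξ
    have h1 := (Real.hasDerivAt_rpow_const (x := ξ) (p := p) (Or.inr (by linarith)))
    have h2 := (((h1.const_sub 1).pow (m + 1)).neg)
    refine HasDerivAt.congr_deriv h2 ?_
    simp only [Nat.add_sub_cancel]
    push_cast
    ring
  have c1 : Continuous (fun ξ : ℝ => ξ ^ p) := Real.continuous_rpow_const (by linarith)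
  have c2 : Continuous (fun ξ : ℝ => ξ ^ (p - 1)) := Real.continuous_rpow_const (by linarith)
  have hF := integral_eq_sub_of_hasDerivAt (a := 0) (b := L) (fun ξ _ => hd ξ)
    (Continuous.intervalIntegrable (by fun_prop) _ _)
  have h0 : (0 : ℝ) ^ p = 0 := Real.zero_rpow (by linarith)
  rw [h0] at hF
  have h3 : 1 - (1 - L ^ p) ^ (m + 1) =
      ∫ ξ in (0 : ℝ)..L, ((m : ℝ) + 1) * (1 - ξ ^ p) ^ m * (p * ξ ^ (p - 1)) := by
    rw [hF]; simp; ring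
  rw [h3, ← intervalIntegral.integral_const_mul]
  apply intervalIntegral.integral_mono_on hL0.le
  · exact Continuous.intervalIntegrable (by fun_prop) _ _
  · exact Continuous.intervalIntegrable (by fun_prop) _ _
  · intro ξ hξ
    have h4 : ξ ^ p ≤ 1 := Real.rpow_le_one hξ.1 (hξ.2.trans hL1) (by linarith)
    have h5 : ξ ^ (p - 1) ≤ L ^ (p - 1) := Real.rpow_le_rpow hξ.1 hξ.2 (by linarith)
    have h6 : 0 ≤ (1 - ξ ^ p) ^ m := pow_nonneg (by linarith) _
    calc ((m : ℝ) + 1) * (1 - ξ ^ p) ^ m * (p * ξ ^ (p - 1))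
        ≤ ((m : ℝ) + 1) * (1 - ξ ^ p) ^ m * (p * L ^ (p - 1)) := by gcongr
      _ = _ := by ring

lemma aux_term (n : ℕ) (hn : 2 ≤ n) (α : ℝ) (hα1 : 1 / (n : ℝ) ≤ α)
    (p L w : ℝ) (hp : 2 ≤ p) (hL0 : 0 < L) (hL1 : L ≤ 1) (hw : 0 < w) (j : ℕ) (hj : n ≤ j) :
    w ^ (j + n) * (1 - (1 - L ^ p) ^ (j + n)) / Real.Gamma (α * ((j + n : ℕ) : ℝ) + 1) ≤
      (p * L ^ (p - 1) * w ^ n / α) *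
        (w ^ j / Real.Gamma (α * j + 1) * ∫ ξ in (0 : ℝ)..L, (1 - ξ ^ p) ^ j) := by
  have hn0 : (0 : ℝ) < n := by exact_mod_cast (by omega : 0 < n)
  have hα : 0 < α := lt_of_lt_of_le (by positivity) hα1
  have hαn : 1 ≤ α * n := by rwa [div_le_iff₀ hn0] at hα1
  have hαj : 1 ≤ α * j := hαn.trans (by gcongr)
  have hjn : (0 : ℝ) < (j : ℝ) + n := by positivity
  have hG := aux_gamma_pos hα j
  have hG1 : Real.Gamma (α * j + 1) ≤ Real.Gamma (α * (j + n)) :=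
    Real.Gamma_strictMonoOn_Ici.monotoneOn (by simp; linarith) (by simp; linarith) (by linarith)
  have hG2 : Real.Gamma (α * ((j + n : ℕ) : ℝ) + 1) = α * (j + n) * Real.Gamma (α * (j + n)) := by
    push_cast
    exact Real.Gamma_add_one (by positivity)
  have c1 : Continuous (fun ξ : ℝ => ξ ^ p) := Real.continuous_rpow_const (by linarith)
  have hI : ∫ ξ in (0 : ℝ)..L, (1 - ξ ^ p) ^ (j + n - 1) ≤ ∫ ξ in (0 : ℝ)..L, (1 - ξ ^ p) ^ j := by
    apply intervalIntegral.integral_mono_on hL0.le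
    · exact Continuous.intervalIntegrable (by fun_prop) _ _
    · exact Continuous.intervalIntegrable (by fun_prop) _ _
    · intro ξ hξ
      have h4 : ξ ^ p ≤ 1 := Real.rpow_le_one hξ.1 (hξ.2.trans hL1) (by linarith)
      have h5 : 0 ≤ ξ ^ p := Real.rpow_nonneg hξ.1 _
      exact pow_le_pow_of_le_one (by linarith) (by linarith) (by omega)
  have hI0 : 0 ≤ ∫ ξ in (0 : ℝ)..L, (1 - ξ ^ p) ^ j := by
    apply intervalIntegral.integral_nonneg hL0.le
    intro ξ hξ
    have h4 : ξ ^ p ≤ 1 := Real.rpow_le_one hξ.1 (hξ.2.trans hL1) (by linarith)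
    exact pow_nonneg (by linarith) _
  have hm := aux_int p L hp hL0 hL1 (j + n - 1)
  have e1 : j + n - 1 + 1 = j + n := by omega
  have e2 : ((j + n - 1 : ℕ) : ℝ) + 1 = j + n := by exact_mod_cast e1
  rw [e1, e2] at hm
  have hLp : 0 < L ^ (p - 1) := Real.rpow_pos_of_pos hL0 _
  have hp0 : 0 < p := by linarith
  have hm2 := hm.trans (mul_le_mul_of_nonneg_left hI
    (by positivity : 0 ≤ ((j : ℝ) + n) * (p * L ^ (p - 1))))
  rw [hG2]
  set I := ∫ ξ in (0 : ℝ)..L, (1 - ξ ^ p) ^ j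
  calc w ^ (j + n) * (1 - (1 - L ^ p) ^ (j + n)) / (α * (j + n) * Real.Gamma (α * (j + n)))
      ≤ w ^ (j + n) * (((j : ℝ) + n) * (p * L ^ (p - 1)) * I) /
        (α * (j + n) * Real.Gamma (α * j + 1)) := by gcongr
    _ = _ := by field_simp; try ring

lemma aux_mono (n : ℕ) (hn : 2 ≤ n) (α : ℝ) (hα1 : 1 / (n : ℝ) ≤ α) {y z : ℝ} (hy : 0 ≤ y)
    (hyz : y ≤ z) : ML α 1 y ≤ ML α 1 z := by
  have hn0 : (0 : ℝ) < n := by exact_mod_cast (by omega : 0 < n)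
  have hα : 0 < α := lt_of_lt_of_le (by positivity) hα1
  refine Summable.tsum_le_tsum (fun k => ?_) (aux_summable n hn α hα1 y hy)
    (aux_summable n hn α hα1 z (hy.trans hyz))
  have := aux_gamma_pos hα k
  gcongr

lemma aux_nonneg (α : ℝ) (hα : 0 < α) {z : ℝ} (hz : 0 ≤ z) : 0 ≤ ML α 1 z := by
  refine tsum_nonneg (fun k => ?_)
  have := aux_gamma_pos hα k
  positivity

lemma aux_integrable (n : ℕ) (hn : 2 ≤ n) (α : ℝ) (hα1 : 1 / (n : ℝ) ≤ α)
    (p a b w : ℝ) (hp : 2 ≤ p) (ha : 0 ≤ a) (hab : a ≤ b) (hL1 : b ≤ 1) (hw : 0 < w) :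
    IntervalIntegrable (fun ξ => ML α 1 (w * (1 - ξ ^ p))) volume a b := by
  apply AntitoneOn.intervalIntegrable
  rw [Set.uIcc_of_le hab]
  intro u hu v hv huv
  have h1 : v ^ p ≤ 1 := Real.rpow_le_one (ha.trans hv.1) (hv.2.trans hL1) (by linarith)
  have h2 : u ^ p ≤ v ^ p := Real.rpow_le_rpow (ha.trans hu.1) huv (by linarith)
  refine aux_mono n hn α hα1 (mul_nonneg hw.le (by linarith)) ?_
  gcongr

lemma aux_main (n : ℕ) (hn : 2 ≤ n) (α : ℝ) (hα1 : 1 / (n : ℝ) ≤ α)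
    (p L w : ℝ) (hp : 2 ≤ p) (hL0 : 0 < L) (hL1 : L ≤ 1) (hw : 0 < w) :
    ML α 1 w - ML α 1 (w * (1 - L ^ p)) -
        ∑ k ∈ Finset.range (2 * n), w ^ k / Real.Gamma (α * k + 1) ≤
      (p * L ^ (p - 1) * w ^ n / α) * ∫ ξ in (0 : ℝ)..L, ML α 1 (w * (1 - ξ ^ p)) := by
  have hn0 : (0 : ℝ) < n := by exact_mod_cast (by omega : 0 < n)
  have hα : 0 < α := lt_of_lt_of_le (by positivity) hα1
  have hδ1 : L ^ p ≤ 1 := Real.rpow_le_one hL0.le hL1 (by linarith)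
  have hδ0 : 0 ≤ L ^ p := Real.rpow_nonneg hL0.le _
  have hs1 := aux_summable n hn α hα1 w hw.le
  have hs2 := aux_summable n hn α hα1 (w * (1 - L ^ p)) (mul_nonneg hw.le (by linarith))
  have hs := hs1.sub hs2
  have hLp : 0 < L ^ (p - 1) := Real.rpow_pos_of_pos hL0 _
  have hp0 : 0 < p := by linarith
  have e : ML α 1 w - ML α 1 (w * (1 - L ^ p)) = ∑' k : ℕ,
      (w ^ k / Real.Gamma (α * k + 1) - (w * (1 - L ^ p)) ^ k / Real.Gamma (α * k + 1)) :=
    (hs1.tsum_sub hs2).symm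
  rw [e, ← hs.sum_add_tsum_nat_add (2 * n)]
  have hfin : ∑ k ∈ Finset.range (2 * n),
      (w ^ k / Real.Gamma (α * k + 1) - (w * (1 - L ^ p)) ^ k / Real.Gamma (α * k + 1)) ≤
      ∑ k ∈ Finset.range (2 * n), w ^ k / Real.Gamma (α * k + 1) := by
    refine Finset.sum_le_sum (fun k _ => ?_)
    have := aux_gamma_pos hα k
    have : 0 ≤ (w * (1 - L ^ p)) ^ k / Real.Gamma (α * k + 1) :=
      div_nonneg (pow_nonneg (mul_nonneg hw.le (by linarith)) _) this.le
    linarith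
  have c1 : Continuous (fun ξ : ℝ => ξ ^ p) := Real.continuous_rpow_const (by linarith)
  suffices hT : ∑' i : ℕ, (w ^ (i + 2 * n) / Real.Gamma (α * ((i + 2 * n : ℕ) : ℝ) + 1) -
      (w * (1 - L ^ p)) ^ (i + 2 * n) / Real.Gamma (α * ((i + 2 * n : ℕ) : ℝ) + 1)) ≤
      (p * L ^ (p - 1) * w ^ n / α) * ∫ ξ in (0 : ℝ)..L, ML α 1 (w * (1 - ξ ^ p)) by
    linarith
  have hterm : ∀ i : ℕ, (w ^ (i + 2 * n) / Real.Gamma (α * ((i + 2 * n : ℕ) : ℝ) + 1) -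
      (w * (1 - L ^ p)) ^ (i + 2 * n) / Real.Gamma (α * ((i + 2 * n : ℕ) : ℝ) + 1)) ≤
      (p * L ^ (p - 1) * w ^ n / α) * (w ^ (i + n) / Real.Gamma (α * ((i + n : ℕ) : ℝ) + 1) *
        ∫ ξ in (0 : ℝ)..L, (1 - ξ ^ p) ^ (i + n)) := by
    intro i
    have h := aux_term n hn α hα1 p L w hp hL0 hL1 hw (i + n) (by omega)
    have e3 : i + n + n = i + 2 * n := by omega
    rw [e3] at h
    refine le_trans (le_of_eq ?_) h
    rw [mul_pow]; ring
  refine Real.tsum_le_of_sum_range_le ?_ ?_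
  · intro i
    have := aux_gamma_pos hα (i + 2 * n)
    rw [← sub_div]
    refine div_nonneg (sub_nonneg.2 ?_) this.le
    exact pow_le_pow_left₀ (mul_nonneg hw.le (by linarith)) (by nlinarith) _
  · intro N
    refine (Finset.sum_le_sum (fun i _ => hterm i)).trans ?_
    rw [← Finset.mul_sum]
    refine mul_le_mul_of_nonneg_left ?_ (by positivity)
    simp_rw [← intervalIntegral.integral_const_mul]
    rw [← intervalIntegral.integral_finsetSum
      (fun i _ => Continuous.intervalIntegrable (by fun_prop) _ _)]
    apply intervalIntegral.integral_mono_on hL0.le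
    · exact Continuous.intervalIntegrable (by fun_prop) _ _
    · exact aux_integrable n hn α hα1 p 0 L w hp le_rfl hL0.le hL1 hw
    · intro ξ hξ
      have h4 : ξ ^ p ≤ 1 := Real.rpow_le_one hξ.1 (hξ.2.trans hL1) (by linarith)
      have h5 : 0 ≤ w * (1 - ξ ^ p) := mul_nonneg hw.le (by linarith)
      have hsx := aux_summable n hn α hα1 _ h5
      have hnn : ∀ k : ℕ, 0 ≤ (w * (1 - ξ ^ p)) ^ k / Real.Gamma (α * k + 1) := fun k =>
        div_nonneg (pow_nonneg h5 _) (aux_gamma_pos hα k).le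
      have h6 := hsx.sum_le_tsum (Finset.Ico n (n + N)) (fun k _ => hnn k)
      rw [Finset.sum_Ico_eq_sum_range] at h6
      refine le_trans (le_of_eq ?_) h6
      rw [Nat.add_sub_cancel_left]
      refine Finset.sum_congr rfl (fun i _ => ?_)
      rw [mul_pow, add_comm n i]; ring

theorem stmt17 (n : ℕ) (hn : 2 ≤ n) (ϱ α ℓ : ℝ) (hϱ : 1 ≤ ϱ)
    (hα1 : 1 / (n : ℝ) ≤ α) (hα2 : α < 1) (hℓ : ℓ ∈ Set.Ioo (0 : ℝ) (Real.pi / 2)) :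
    ∃ c0 : ℝ → ℝ → ℝ,
      (∀ t : ℝ, 0 < t → ∀ x : ℝ, Real.pi / 2 < x →
        aZero α ϱ t x ≥
          (Real.cos ℓ / (2 * ϱ)) * (x / ℓ) ^ (2 * ϱ - 1) * (α / t ^ (α * n)) *
            (ML α 1 (t ^ α) - ML α 1 (t ^ α * (1 - (ℓ / x) ^ (2 * ϱ))) + c0 t x)) ∧
      (∀ β : ℝ, ∀ m : ℝ, 0 < m →
        Tendsto (fun t : ℝ => c0 t (m * t ^ β) / ML α 1 (t ^ α)) atTop (nhds 0)) := by
  have hn0 : (0 : ℝ) < n := by exact_mod_cast (by omega : 0 < n)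
  have hα : 0 < α := lt_of_lt_of_le (by positivity) hα1
  obtain ⟨hℓ0, hℓ1⟩ := hℓ
  refine ⟨fun t _ => -∑ k ∈ Finset.range (2 * n), (t ^ α) ^ k / Real.Gamma (α * k + 1), ?_, ?_⟩
  · intro t ht x hx
    have hx0 : 0 < x := by linarith [Real.pi_pos]
    set w := t ^ α with hwdef
    have hw : 0 < w := Real.rpow_pos_of_pos ht _
    have htn : t ^ (α * n) = w ^ n := by rw [Real.rpow_mul ht.le, Real.rpow_natCast]
    set L := ℓ / x with hLdef
    have hL0 : 0 < L := by positivity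
    have hL1 : L ≤ 1 := by rw [hLdef, div_le_one hx0]; linarith
    set B := Real.pi / (2 * x) with hB
    have hB1 : B ≤ 1 := by rw [hB, div_le_one (by positivity)]; linarith
    have hLB : L ≤ B := by
      rw [hLdef, hB, div_le_div_iff₀ hx0 (by positivity)]; nlinarith
    have hxB : x * B = Real.pi / 2 := by rw [hB]; field_simp
    have hxL : x * L = ℓ := by rw [hLdef]; field_simp
    have hp : 2 ≤ 2 * ϱ := by linarith
    have hxl : (x / ℓ) ^ (2 * ϱ - 1) = (L ^ (2 * ϱ - 1))⁻¹ := by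
      rw [← Real.inv_rpow hL0.le, hLdef, inv_div]
    have hcos : 0 < Real.cos ℓ := Real.cos_pos_of_mem_Ioo ⟨by linarith, hℓ1⟩
    have hLp : 0 < L ^ (2 * ϱ - 1) := Real.rpow_pos_of_pos hL0 _
    have hmain := aux_main n hn α hα1 (2 * ϱ) L w hp hL0 hL1 hw
    have hi1 := aux_integrable n hn α hα1 (2 * ϱ) 0 L w hp le_rfl hL0.le hL1 hw
    have hi2 := aux_integrable n hn α hα1 (2 * ϱ) L B w hp hL0.le hLB hB1 hw
    have hj1 := hi1.mul_continuousOn (g := fun ξ => Real.cos (x * ξ)) (by fun_prop)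
    have hj2 := hi2.mul_continuousOn (g := fun ξ => Real.cos (x * ξ)) (by fun_prop)
    have hML : ∀ ξ : ℝ, 0 ≤ ξ → ξ ≤ 1 → 0 ≤ ML α 1 (w * (1 - ξ ^ (2 * ϱ))) := by
      intro ξ h0 h1
      have h4 : ξ ^ (2 * ϱ) ≤ 1 := Real.rpow_le_one h0 h1 (by linarith)
      exact aux_nonneg α hα (mul_nonneg hw.le (by linarith))
    have ha : Real.cos ℓ * ∫ ξ in (0 : ℝ)..L, ML α 1 (w * (1 - ξ ^ (2 * ϱ))) ≤ aZero α ϱ t x := by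
      unfold aZero
      rw [← hwdef, ← hB, ← intervalIntegral.integral_add_adjacent_intervals hj1 hj2,
        ← intervalIntegral.integral_const_mul]
      have hA1 : ∫ ξ in (0 : ℝ)..L, Real.cos ℓ * ML α 1 (w * (1 - ξ ^ (2 * ϱ))) ≤
          ∫ ξ in (0 : ℝ)..L, ML α 1 (w * (1 - ξ ^ (2 * ϱ))) * Real.cos (x * ξ) := by
        apply intervalIntegral.integral_mono_on hL0.le (hi1.const_mul _) hj1
        intro ξ hξ
        have h1 := hML ξ hξ.1 (hξ.2.trans hL1)
        have h2 : x * ξ ≤ ℓ := hxL ▸ (mul_le_mul_of_nonneg_left hξ.2 hx0.le)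
        have h3 : Real.cos ℓ ≤ Real.cos (x * ξ) :=
          Real.cos_le_cos_of_nonneg_of_le_pi (mul_nonneg hx0.le hξ.1)
            (by linarith [Real.pi_pos]) h2
        rw [mul_comm]
        gcongr
      have hA2 : 0 ≤ ∫ ξ in L..B, ML α 1 (w * (1 - ξ ^ (2 * ϱ))) * Real.cos (x * ξ) := by
        apply intervalIntegral.integral_nonneg hLB
        intro ξ hξ
        have hξ0 : 0 ≤ ξ := hL0.le.trans hξ.1
        have h2 : x * ξ ≤ Real.pi / 2 := hxB ▸ (mul_le_mul_of_nonneg_left hξ.2 hx0.le)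
        refine mul_nonneg (hML ξ hξ0 (hξ.2.trans hB1)) (Real.cos_nonneg_of_mem_Icc ⟨?_, h2⟩)
        have := mul_nonneg hx0.le hξ0
        linarith [Real.pi_pos]
      linarith
    refine ge_iff_le.2 (le_trans ?_ ha)
    rw [htn, hxl, ← sub_eq_add_neg]
    have hK : 0 ≤ Real.cos ℓ / (2 * ϱ) * (L ^ (2 * ϱ - 1))⁻¹ * (α / w ^ n) := by positivity
    refine (mul_le_mul_of_nonneg_left hmain hK).trans (le_of_eq ?_)
    have : ϱ ≠ 0 := by linarith
    field_simp
  · intro β m _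
    have hw : Tendsto (fun t : ℝ => t ^ α) atTop atTop := tendsto_rpow_atTop hα
    have key : ∀ k : ℕ, Tendsto (fun w : ℝ => (w ^ k / Real.Gamma (α * k + 1)) / ML α 1 w)
        atTop (nhds 0) := by
      intro k
      have hk := aux_gamma_pos hα k
      have hk1 := aux_gamma_pos hα (k + 1)
      have hlim : Tendsto (fun w : ℝ => (Real.Gamma (α * ((k + 1 : ℕ) : ℝ) + 1) /
          Real.Gamma (α * k + 1)) / w) atTop (nhds 0) :=
        tendsto_const_nhds.div_atTop tendsto_id
      refine squeeze_zero' ?_ ?_ hlim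
      · filter_upwards [eventually_gt_atTop 0] with w hw0
        have := aux_nonneg α hα hw0.le
        positivity
      · filter_upwards [eventually_gt_atTop 0] with w hw0
        have h1 : w ^ (k + 1) / Real.Gamma (α * ((k + 1 : ℕ) : ℝ) + 1) ≤ ML α 1 w :=
          (aux_summable n hn α hα1 w hw0.le).le_tsum (k + 1)
            (fun j _ => div_nonneg (pow_nonneg hw0.le _) (aux_gamma_pos hα j).le)
        calc (w ^ k / Real.Gamma (α * k + 1)) / ML α 1 w
            ≤ (w ^ k / Real.Gamma (α * k + 1)) /
              (w ^ (k + 1) / Real.Gamma (α * ((k + 1 : ℕ) : ℝ) + 1)) := by gcongr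
          _ = _ := by rw [pow_succ]; field_simp
    have hsum := (tendsto_finsetSum (Finset.range (2 * n)) (fun k _ => key k)).neg.comp hw
    simp only [Finset.sum_const_zero, neg_zero] at hsum
    refine hsum.congr (fun t => ?_)
    simp only [Function.comp, neg_div, Finset.sum_div]
end

section
/- Let n ∈ {2,3,...}, ϱ ≥ 1, and α ∈ [1/n, 1). Then there exists a function c_1 : (0,∞) × (0,∞) → ℝ such that: (1) for all t > 0 and all x > 3π/2, a_1(t,x) ≤ (α / (2 t^α ϱ)) (2x/π)^{2ϱ-1} [ E_α(t^α(1−(π/(2x))^{2ϱ})) − E_α(t^α(1−(3π/(2x))^{2ϱ})) + c_1(t,x) ]; and (2) for every β ∈ ℝ and every m > 0, t^{α(n-1)} c_1(t, m t^β) / E_α(t^α) → 0 as t → ∞. -/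
open Real MeasureTheory Filter Topology intervalIntegral

/-- The coefficient `a_1(t,x)`. -/
noncomputable def aOne (α ϱ t x : ℝ) : ℝ :=
  -∫ ξ in (Real.pi / (2 * x))..(3 * Real.pi / (2 * x)),
      ML α 1 (t ^ α * (1 - ξ ^ (2 * ϱ))) * Real.cos (x * ξ)

lemma gamma_lower (s M : ℝ) (hs : 1 ≤ s) (hM : 0 < M) :
    M ^ (s - 1) * Real.exp (-M) ≤ Real.Gamma s := by
  have hs0 : 0 < s := by linarith
  rw [Real.Gamma_eq_integral hs0]
  have hint := Real.GammaIntegral_convergent hs0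
  have h1 : ∫ x in Set.Ioi M, Real.exp (-x) * x ^ (s - 1) ≤
      ∫ x in Set.Ioi 0, Real.exp (-x) * x ^ (s - 1) := by
    apply setIntegral_mono_set hint
    · filter_upwards [ae_restrict_mem measurableSet_Ioi] with x hx
      have : (0 : ℝ) < x := hx
      simp only [Pi.zero_apply]
      positivity
    · exact (Set.Ioi_subset_Ioi hM.le).eventuallyLE
  have h2 : ∫ x in Set.Ioi M, M ^ (s - 1) * Real.exp (-x) ≤
      ∫ x in Set.Ioi M, Real.exp (-x) * x ^ (s - 1) := by
    apply setIntegral_mono_on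
    · exact (integrableOn_exp_neg_Ioi M).const_mul _
    · exact hint.mono_set (Set.Ioi_subset_Ioi hM.le)
    · exact measurableSet_Ioi
    · intro x hx
      have hx' : M < x := hx
      rw [mul_comm]
      gcongr
  rw [MeasureTheory.integral_const_mul, integral_exp_neg_Ioi] at h2
  linarith

lemma ml_summable (α : ℝ) (hα : 0 < α) (r : ℝ) (hr : 0 ≤ r) :
    Summable (fun k : ℕ => r ^ k / Real.Gamma (α * k + 1)) := by
  set M : ℝ := (2 * (r + 1)) ^ (1 / α) with hM
  have hM0 : 0 < M := by positivity
  have hMα : M ^ α = 2 * (r + 1) := by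
    rw [hM, ← Real.rpow_mul (by positivity), one_div, inv_mul_cancel₀ hα.ne', Real.rpow_one]
  have hgeo : Summable (fun k : ℕ => Real.exp M * (1 / 2 : ℝ) ^ k) :=
    (summable_geometric_of_lt_one (by norm_num) (by norm_num)).mul_left _
  refine Summable.of_nonneg_of_le (fun k => ?_) (fun k => ?_) hgeo
  · have : 0 < Real.Gamma (α * k + 1) := Real.Gamma_pos_of_pos (by positivity)
    positivity
  · have hG : 0 < Real.Gamma (α * k + 1) := Real.Gamma_pos_of_pos (by positivity)
    have h := gamma_lower (α * k + 1) M (by have : 0 ≤ α * k := by positivity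
                                            linarith) hM0
    rw [add_sub_cancel_right, Real.rpow_mul hM0.le, hMα, Real.rpow_natCast] at h
    rw [div_le_iff₀ hG]
    calc r ^ k ≤ (r + 1) ^ k := by gcongr; linarith
      _ = Real.exp M * (1 / 2 : ℝ) ^ k * ((2 * (r + 1)) ^ k * Real.exp (-M)) := by
          rw [Real.exp_neg, mul_pow, one_div, inv_pow]
          field_simp
      _ ≤ _ := by gcongr

/-- term derivative series -/
noncomputable def MLd (α z : ℝ) : ℝ :=
  ∑' k : ℕ, (k * z ^ (k - 1)) / Real.Gamma (α * k + 1)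

lemma mld_bound (α : ℝ) (hα : 0 < α) (R : ℝ) (hR : 1 ≤ R) (k : ℕ) (y : ℝ) (hy : |y| ≤ R) :
    ‖(k * y ^ (k - 1)) / Real.Gamma (α * k + 1)‖ ≤ (2 * R) ^ k / Real.Gamma (α * k + 1) := by
  have hG : 0 < Real.Gamma (α * k + 1) := Real.Gamma_pos_of_pos (by positivity)
  rw [Real.norm_eq_abs, abs_div, abs_of_pos hG, abs_mul, abs_pow, mul_pow, Nat.abs_cast]
  gcongr
  · exact_mod_cast (Nat.lt_two_pow_self (n := k)).le
  · calc |y| ^ (k - 1) ≤ R ^ (k - 1) := by gcongr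
      _ ≤ R ^ k := pow_le_pow_right₀ hR (by omega)

lemma ml_hasDerivAt (α : ℝ) (hα : 0 < α) (z : ℝ) : HasDerivAt (ML α 1) (MLd α z) z := by
  set R : ℝ := |z| + 1
  have hR : 1 ≤ R := by have := abs_nonneg z; simp only [R]; linarith
  refine hasDerivAt_tsum_of_isPreconnected (u := fun k : ℕ => (2 * R) ^ k / Real.Gamma (α * k + 1))
    (t := Metric.ball 0 R) (y₀ := 0)
    (g := fun (k : ℕ) (y : ℝ) => y ^ k / Real.Gamma (α * k + 1))
    (g' := fun (k : ℕ) (y : ℝ) => (k * y ^ (k - 1)) / Real.Gamma (α * k + 1))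
    (ml_summable α hα _ (by positivity)) Metric.isOpen_ball
    (convex_ball _ _).isPreconnected ?_ ?_ ?_ ?_ ?_
  · intro k y _
    exact (hasDerivAt_pow k y).div_const _
  · intro k y hy
    apply mld_bound α hα R hR
    rw [Metric.mem_ball, dist_zero_right] at hy
    exact hy.le
  · simp; linarith
  · exact ml_summable α hα 0 le_rfl
  · simp [R]

lemma mld_summable (α : ℝ) (hα : 0 < α) (z : ℝ) :
    Summable (fun k : ℕ => (k * z ^ (k - 1)) / Real.Gamma (α * k + 1)) := by
  have hR : 1 ≤ |z| + 1 := by have := abs_nonneg z; linarith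
  exact Summable.of_norm_bounded (ml_summable α hα (2 * (|z| + 1)) (by positivity))
    (fun k => mld_bound α hα _ hR k z (by linarith))

lemma ml_le (α : ℝ) (hα : 0 < α) (hα2 : α < 1) :
    ∃ C : ℝ, 0 ≤ C ∧ ∃ K : ℕ, ∀ z : ℝ, 0 ≤ z → ML α 1 z ≤ α * MLd α z + C * (1 + z) ^ K := by
  obtain ⟨K, hK⟩ := exists_nat_ge (2 / α)
  rw [div_le_iff₀ hα] at hK
  set d : ℕ → ℝ := fun k => 1 / Real.Gamma (α * k + 1) - 1 / Real.Gamma (α * k + α) with hd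
  refine ⟨∑ k ∈ Finset.range K, |d k|, Finset.sum_nonneg (fun _ _ => abs_nonneg _), K, ?_⟩
  intro z hz
  have hs := mld_summable α hα z
  have h1 : α * MLd α z = ∑' k : ℕ, z ^ k / Real.Gamma (α * k + α) := by
    rw [MLd, hs.tsum_eq_zero_add, Nat.cast_zero, zero_mul, zero_div, zero_add, ← tsum_mul_left]
    congr 1
    ext k
    have e : α * ((k + 1 : ℕ) : ℝ) = α * k + α := by push_cast; ring
    have hp : 0 < α * (k : ℝ) + α := by positivity
    have hG := Real.Gamma_pos_of_pos hp
    rw [e, Real.Gamma_add_one hp.ne', Nat.add_sub_cancel]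
    push_cast
    field_simp
  have hs2 : Summable (fun k : ℕ => z ^ k / Real.Gamma (α * k + α)) := by
    have := ((summable_nat_add_iff 1).2 hs).mul_left α
    refine this.congr (fun k => ?_)
    have e : α * ((k + 1 : ℕ) : ℝ) = α * k + α := by push_cast; ring
    have hp : 0 < α * (k : ℝ) + α := by positivity
    have hG := Real.Gamma_pos_of_pos hp
    rw [e, Real.Gamma_add_one hp.ne', Nat.add_sub_cancel]
    push_cast
    field_simp
  have hs1 := ml_summable α hα z hz
  have hsub := hs1.sub hs2
  have h2 : ML α 1 z - α * MLd α z =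
      ∑' k : ℕ, (z ^ k / Real.Gamma (α * k + 1) - z ^ k / Real.Gamma (α * k + α)) := by
    rw [h1, ML, hs1.tsum_sub hs2]
  rw [← hsub.sum_add_tsum_nat_add K] at h2
  have h3 : ∑' k : ℕ, (z ^ (k + K) / Real.Gamma (α * (k + K : ℕ) + 1)
      - z ^ (k + K) / Real.Gamma (α * (k + K : ℕ) + α)) ≤ 0 := by
    apply tsum_nonpos
    intro k
    have hk : 2 ≤ α * ((k + K : ℕ) : ℝ) := by
      push_cast
      have : 0 ≤ α * (k : ℝ) := by positivity
      nlinarith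
    have hG : 0 < Real.Gamma (α * (k + K : ℕ) + α) := Real.Gamma_pos_of_pos (by linarith)
    have hm : Real.Gamma (α * (k + K : ℕ) + α) ≤ Real.Gamma (α * (k + K : ℕ) + 1) :=
      Real.Gamma_strictMonoOn_Ici.monotoneOn (by simp only [Set.mem_Ici]; linarith)
        (by simp only [Set.mem_Ici]; linarith) (by linarith)
    rw [sub_nonpos]
    gcongr
  have h4 : ∑ k ∈ Finset.range K, (z ^ k / Real.Gamma (α * k + 1)
      - z ^ k / Real.Gamma (α * k + α)) ≤ (∑ k ∈ Finset.range K, |d k|) * (1 + z) ^ K := by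
    rw [Finset.sum_mul]
    apply Finset.sum_le_sum
    intro k hk
    have hkK := (Finset.mem_range.1 hk).le
    calc _ = d k * z ^ k := by simp only [hd]; ring
      _ ≤ |d k| * z ^ k := by gcongr; exact le_abs_self _
      _ ≤ |d k| * (1 + z) ^ k := by gcongr; linarith
      _ ≤ |d k| * (1 + z) ^ K := by
        gcongr
        linarith
  linarith

lemma ml_nonneg (α : ℝ) (hα : 0 < α) (z : ℝ) (hz : 0 ≤ z) : 0 ≤ ML α 1 z := by
  apply tsum_nonneg
  intro k
  have hG : 0 < Real.Gamma (α * k + 1) := Real.Gamma_pos_of_pos (by positivity)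
  positivity

lemma mld_nonneg (α : ℝ) (hα : 0 < α) (z : ℝ) (hz : 0 ≤ z) : 0 ≤ MLd α z := by
  apply tsum_nonneg
  intro k
  have hG : 0 < Real.Gamma (α * k + 1) := Real.Gamma_pos_of_pos (by positivity)
  positivity

lemma ml_ge (α : ℝ) (hα : 0 < α) (z : ℝ) (hz : 0 ≤ z) (j : ℕ) :
    z ^ j / Real.Gamma (α * j + 1) ≤ ML α 1 z := by
  apply (ml_summable α hα z hz).le_tsum j
  intro k _
  have hG : 0 < Real.Gamma (α * k + 1) := Real.Gamma_pos_of_pos (by positivity)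
  positivity

lemma aOne_le (α ϱ t x P : ℝ) (hα : 0 < α) (hϱ : 1 ≤ ϱ) (ht : 0 < t) (hx : 3 * π / 2 < x)
    (hP0 : 0 ≤ P)
    (hP : ∀ z : ℝ, 0 ≤ z → z ≤ t ^ α → ML α 1 z ≤ α * MLd α z + P) :
    aOne α ϱ t x ≤
          (α / (2 * t ^ α * ϱ)) * (2 * x / Real.pi) ^ (2 * ϱ - 1) *
            (ML α 1 (t ^ α * (1 - (Real.pi / (2 * x)) ^ (2 * ϱ))) -
              ML α 1 (t ^ α * (1 - (3 * Real.pi / (2 * x)) ^ (2 * ϱ)))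
              + 2 * t ^ α * ϱ / α * P) := by
  have hpi := Real.pi_pos
  have hx0 : 0 < x := by linarith
  have hs : 0 < t ^ α := Real.rpow_pos_of_pos ht _
  set s := t ^ α
  set a := π / (2 * x) with ha
  set b := 3 * π / (2 * x) with hb
  have ha0 : 0 < a := by positivity
  have hab : a ≤ b := by rw [ha, hb]; gcongr; linarith
  have hb1 : b ≤ 1 := by rw [hb, div_le_one (by positivity)]; linarith
  have hba : b - a ≤ 1 := by linarith
  have hcont : Continuous (ML α 1) :=
    continuous_iff_continuousAt.2 (fun z => (ml_hasDerivAt α hα z).continuousAt)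
  set A := (α / (2 * s * ϱ)) * (2 * x / π) ^ (2 * ϱ - 1) with hA
  have hpc : Continuous (fun ξ : ℝ => ξ ^ (2 * ϱ)) :=
    Real.continuous_rpow_const (by linarith)
  have hc2 : Continuous (fun ξ : ℝ => ML α 1 (s * (1 - ξ ^ (2 * ϱ)))) := by fun_prop
  have hax : 2 * x / π = a⁻¹ := by rw [ha, inv_div]
  have hA' : A = α / (2 * s * ϱ) * (a ^ (2 * ϱ - 1))⁻¹ := by
    rw [hA, hax, Real.inv_rpow ha0.le]
  have key := intervalIntegral.integral_le_sub_of_hasDeriv_right_of_le (a := a) (b := b)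
    (g := fun ξ => -A * ML α 1 (s * (1 - ξ ^ (2 * ϱ))) + P * ξ)
    (g' := fun ξ => -A * (MLd α (s * (1 - ξ ^ (2 * ϱ))) * (s * (-(2 * ϱ * ξ ^ (2 * ϱ - 1))))) + P)
    (φ := fun ξ => -(ML α 1 (s * (1 - ξ ^ (2 * ϱ))) * Real.cos (x * ξ)))
    hab (by fun_prop) ?_ ?_ ?_
  · rw [intervalIntegral.integral_neg] at key
    unfold aOne
    refine key.trans ?_
    have hone : 1 ≤ (2 * x / π) ^ (2 * ϱ - 1) := by
      apply Real.one_le_rpow _ (by linarith)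
      rw [one_le_div hpi]; linarith
    have hAP : P ≤ A * (2 * s * ϱ / α * P) := by
      have : A * (2 * s * ϱ / α * P) = (2 * x / π) ^ (2 * ϱ - 1) * P := by
        rw [hA]; field_simp
      rw [this]
      nlinarith
    have : P * (b - a) ≤ P := by nlinarith
    nlinarith
  · intro ξ hξ
    have hξ0 : 0 < ξ := ha0.trans hξ.1
    apply HasDerivAt.hasDerivWithinAt
    have h1 : HasDerivAt (fun ξ : ℝ => s * (1 - ξ ^ (2 * ϱ)))
        (s * (-(2 * ϱ * ξ ^ (2 * ϱ - 1)))) ξ :=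
      ((Real.hasDerivAt_rpow_const (Or.inl hξ0.ne')).const_sub 1).const_mul s
    have h2 := ((ml_hasDerivAt α hα (s * (1 - ξ ^ (2 * ϱ)))).comp ξ h1).const_mul (-A)
    have h3 := h2.add ((hasDerivAt_id ξ).const_mul P)
    rw [mul_one] at h3
    exact h3
  · apply ContinuousOn.integrableOn_Icc
    fun_prop
  · intro ξ hξ
    have hξ0 : 0 < ξ := ha0.trans hξ.1
    have hpow1 : ξ ^ (2 * ϱ) ≤ 1 := Real.rpow_le_one hξ0.le (by linarith [hξ.2]) (by linarith)
    have hpow0 : 0 ≤ ξ ^ (2 * ϱ) := by positivity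
    have hy0 : 0 ≤ s * (1 - ξ ^ (2 * ϱ)) := mul_nonneg hs.le (by linarith)
    have hy1 : s * (1 - ξ ^ (2 * ϱ)) ≤ s := by nlinarith
    have hE := hP _ hy0 hy1
    have hE0 := ml_nonneg α hα _ hy0
    have hD0 := mld_nonneg α hα _ hy0
    set y := s * (1 - ξ ^ (2 * ϱ))
    have hcos := Real.neg_one_le_cos (x * ξ)
    have hmono : a ^ (2 * ϱ - 1) ≤ ξ ^ (2 * ϱ - 1) :=
      Real.rpow_le_rpow ha0.le hξ.1.le (by linarith)
    have hap : 0 < a ^ (2 * ϱ - 1) := by positivity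
    have e : -A * (MLd α y * (s * (-(2 * ϱ * ξ ^ (2 * ϱ - 1))))) =
        α * MLd α y * (ξ ^ (2 * ϱ - 1) / a ^ (2 * ϱ - 1)) := by
      rw [hA']; field_simp
    have h1 : 1 ≤ ξ ^ (2 * ϱ - 1) / a ^ (2 * ϱ - 1) := by rwa [one_le_div hap]
    have h2 : α * MLd α y ≤ α * MLd α y * (ξ ^ (2 * ϱ - 1) / a ^ (2 * ϱ - 1)) :=
      le_mul_of_one_le_right (by positivity) h1
    rw [e]
    nlinarith

theorem stmt18 (n : ℕ) (hn : 2 ≤ n) (ϱ α : ℝ) (hϱ : 1 ≤ ϱ)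
    (hα1 : 1 / (n : ℝ) ≤ α) (hα2 : α < 1) :
    ∃ c1 : ℝ → ℝ → ℝ,
      (∀ t : ℝ, 0 < t → ∀ x : ℝ, 3 * Real.pi / 2 < x →
        aOne α ϱ t x ≤
          (α / (2 * t ^ α * ϱ)) * (2 * x / Real.pi) ^ (2 * ϱ - 1) *
            (ML α 1 (t ^ α * (1 - (Real.pi / (2 * x)) ^ (2 * ϱ))) -
              ML α 1 (t ^ α * (1 - (3 * Real.pi / (2 * x)) ^ (2 * ϱ))) + c1 t x)) ∧
      (∀ β : ℝ, ∀ m : ℝ, 0 < m →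
        Tendsto (fun t : ℝ => t ^ (α * ((n : ℝ) - 1)) * c1 t (m * t ^ β) / ML α 1 (t ^ α))
          atTop (nhds 0)) := by
  have hα : 0 < α := lt_of_lt_of_le (by positivity) hα1
  obtain ⟨C, hC, K, hCK⟩ := ml_le α hα hα2
  refine ⟨fun t _ => 2 * t ^ α * ϱ / α * (C * (1 + t ^ α) ^ K), ?_, ?_⟩
  · intro t ht x hx
    have hs : 0 < t ^ α := Real.rpow_pos_of_pos ht _
    apply aOne_le α ϱ t x _ hα hϱ ht hx (by positivity)
    intro z hz hz1
    refine (hCK z hz).trans ?_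
    gcongr
  · intro β m hm
    obtain ⟨N, rfl⟩ : ∃ N, n = N + 1 := ⟨n - 1, by omega⟩
    set j := N + K + 2 with hj
    set G := Real.Gamma (α * j + 1) with hGdef
    have hG : 0 < G := Real.Gamma_pos_of_pos (by positivity)
    have hlim : Tendsto (fun t : ℝ => (2 * ϱ / α * C * 2 ^ K * G) * (t ^ α)⁻¹) atTop (nhds 0) := by
      have := (tendsto_inv_atTop_zero.comp (tendsto_rpow_atTop hα)).const_mul
        (2 * ϱ / α * C * 2 ^ K * G)
      rw [mul_zero] at this
      exact this
    refine tendsto_of_tendsto_of_tendsto_of_le_of_le' tendsto_const_nhds hlim ?_ ?_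
    · filter_upwards [eventually_gt_atTop 0] with t ht
      have hs : 0 < t ^ α := Real.rpow_pos_of_pos ht _
      have := ml_nonneg α hα _ hs.le
      positivity
    · filter_upwards [eventually_ge_atTop 1] with t ht
      have ht0 : 0 < t := by linarith
      have hs : 1 ≤ t ^ α := Real.one_le_rpow ht hα.le
      have e : t ^ (α * (((N + 1 : ℕ) : ℝ) - 1)) = (t ^ α) ^ N := by
        rw [Real.rpow_mul ht0.le]; push_cast; rw [add_sub_cancel_right, Real.rpow_natCast]
      rw [e]
      set s := t ^ α
      have hs0 : 0 < s := by linarith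
      have hge := ml_ge α hα s hs0.le j
      have hpos : 0 < s ^ j / G := by positivity
      calc s ^ N * (2 * s * ϱ / α * (C * (1 + s) ^ K)) / ML α 1 s
          ≤ s ^ N * (2 * s * ϱ / α * (C * (2 * s) ^ K)) / (s ^ j / G) := by
            gcongr
            linarith
        _ = _ := by
            rw [hj, mul_pow]
            field_simp
            try ring
end

section
/- Let n ∈ {2,3,...}, ϱ ≥ 1, α ∈ [1/n, 1), β ∈ (0, 1/(2ϱ)) and m > 0. Let ℓ ∈ (0, π/2) be the unique solution of cos ℓ = ℓ, and set C₁ := α ℓ^{2-2ϱ} / (2ϱ). Then there exists a function ε : (0,∞) → ℝ with ε(t) → 0 as t → ∞ such that for all sufficiently large t, u_{α,ϱ}(t, m t^β) ≥ C₁ m^{2ϱ-1} t^{β(2ϱ-1) − αn} E_α(t^α) (1 − ε(t)). In particular, u_{α,ϱ}(t, m t^β) → ∞ as t → ∞. -/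
open Real MeasureTheory Filter Topology intervalIntegral

lemma term_upper (t s : ℝ) (ht : 0 < t) (k : ℕ) (hk : (k:ℝ) ≤ s) (hk' : s < k + 1) :
    t ^ s / Gamma (s + 1) ≤ t ^ (k+1) / (k+1).factorial + 2 * (t ^ k / k.factorial) := by
  rcases hk.eq_or_lt with h | h
  · subst h
    rw [Real.Gamma_nat_eq_factorial, rpow_natCast]
    have : 0 ≤ t ^ (k+1) / ((k+1).factorial : ℝ) := by positivity
    have : 0 ≤ t ^ (k) / ((k).factorial : ℝ) := by positivity
    linarith
  have hs : 0 < s := lt_of_le_of_lt (by positivity) h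
  have hG : 0 < Gamma (s+1) := Gamma_pos_of_pos (by linarith)
  have h1 := Gamma_mul_add_mul_le_rpow_Gamma_mul_rpow_Gamma (s := s+1) (t := s+1+1)
    (a := s - k) (b := k + 1 - s) (by linarith) (by linarith) (by linarith) (by linarith) (by ring)
  rw [show (s - k) * (s+1) + (k+1-s) * (s+1+1) = ((k+1 : ℕ) : ℝ) + 1 by push_cast; ring,
    Real.Gamma_nat_eq_factorial, Real.Gamma_add_one (by linarith : s+1 ≠ 0),
    Real.mul_rpow (by linarith) hG.le, mul_left_comm, ← Real.rpow_add hG] at h1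
  rw [show s - k + (k+1-s) = 1 by ring, rpow_one] at h1
  have h2 := geom_mean_le_arith_mean2_weighted (w₁ := s - k) (w₂ := k + 1 - s) (p₁ := t)
    (p₂ := s+1) (by linarith) (by linarith) ht.le (by linarith) (by ring)
  have hf : (0:ℝ) < (k+1).factorial := by positivity
  have h3 : t ^ s = t ^ k * t ^ (s - k) := by
    rw [← rpow_natCast, ← rpow_add ht]; congr 1; ring
  have h4 : t ^ s / Gamma (s+1) ≤ t^k * (t ^ (s-k) * (s+1) ^ ((k:ℝ)+1-s)) / (k+1).factorial := by
    rw [div_le_div_iff₀ hG hf, h3]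
    have : 0 ≤ t ^ k * t ^ (s-k) := by positivity
    nlinarith [mul_le_mul_of_nonneg_left h1 this]
  refine h4.trans ?_
  have h5 : t^k * (t ^ (s-k) * (s+1) ^ ((k:ℝ)+1-s)) ≤ t^k * (t + (2 * (k+1))) := by
    apply mul_le_mul_of_nonneg_left _ (by positivity)
    refine h2.trans ?_
    have : (s - k) * t ≤ 1 * t := by apply mul_le_mul_of_nonneg_right _ ht.le; linarith
    have : (k + 1 - s) * (s + 1) ≤ 1 * (s+1) := by
      apply mul_le_mul_of_nonneg_right _ (by linarith); linarith
    have : (0:ℝ) ≤ k := by positivity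
    linarith
  refine (div_le_div_of_nonneg_right h5 hf.le).trans (le_of_eq ?_)
  rw [Nat.factorial_succ]; push_cast
  field_simp
  ring

lemma term_lower (t s : ℝ) (ht : 0 < t) (k : ℕ) (hk : (k:ℝ) ≤ s) (hk' : s < k + 1) :
    t ^ k / k.factorial * (t / (t + k + 1)) ≤ t ^ s / Gamma (s + 1) := by
  rcases hk.eq_or_lt with h | h
  · subst h
    rw [Real.Gamma_nat_eq_factorial, rpow_natCast]
    have : 0 ≤ t ^ (k) / ((k).factorial : ℝ) := by positivity
    apply mul_le_of_le_one_right this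
    rw [div_le_one (by positivity)]
    have : (0:ℝ) ≤ k := by positivity
    linarith
  have hs : 0 < s := lt_of_le_of_lt (by positivity) h
  have hG : 0 < Gamma (s+1) := Gamma_pos_of_pos (by linarith)
  have hf : (0:ℝ) < (k).factorial := by positivity
  have h1 := Gamma_mul_add_mul_le_rpow_Gamma_mul_rpow_Gamma (s := k+1) (t := k+1+1)
    (a := k + 1 - s) (b := s - k) (by positivity) (by positivity) (by linarith) (by linarith) (by ring)
  rw [show (k+1-s) * (k+1) + (s - k) * ((k:ℝ)+1+1) = s + 1 by ring,
    Real.Gamma_add_one (by positivity : (k:ℝ)+1 ≠ 0),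
    Real.Gamma_nat_eq_factorial, 
    Real.mul_rpow (by positivity) hf.le, mul_left_comm, ← Real.rpow_add hf] at h1
  rw [show (k+1-s) + (s - k) = 1 by ring, rpow_one] at h1
  have h2 := geom_mean_le_arith_mean2_weighted (w₁ := s - k) (w₂ := k + 1 - s) (p₁ := (k+1) / t)
    (p₂ := 1) (by linarith) (by linarith) (by positivity) (by linarith) (by ring)
  rw [one_rpow, mul_one, div_rpow (by positivity) ht.le] at h2
  have h3 : t ^ s = t ^ k * t ^ (s - k) := by
    rw [← rpow_natCast, ← rpow_add ht]; congr 1; ring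
  have h4 : ((k:ℝ)+1)^(s-k) / t ^ (s-k) ≤ (t + k + 1) / t := by
    refine h2.trans ?_
    have e1 : (s - k) * ((k+1)/t) ≤ 1 * ((k+1)/t) := by
      apply mul_le_mul_of_nonneg_right _ (by positivity); linarith
    have : (t + k + 1) / t = 1 + (k+1)/t := by field_simp; ring
    rw [this]; linarith
  have hp : 0 < t ^ (s-k) := by positivity
  rw [div_le_div_iff₀ hp ht] at h4
  rw [h3, div_mul_div_comm, div_le_div_iff₀ (by positivity) hG]
  calc t^k * t * Gamma (s+1) ≤ t^k * t * ((k+1)^(s-k) * k.factorial) := by gcongr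
    _ = t^k * k.factorial * ((k+1)^(s-k) * t) := by ring
    _ ≤ t^k * k.factorial * ((t+k+1) * t^(s-k)) := by gcongr
    _ = _ := by ring

lemma exp_hasSum (t : ℝ) : HasSum (fun k : ℕ => t ^ k / (k.factorial : ℝ)) (exp t) := by
  rw [Real.exp_eq_exp_ℝ]; exact NormedSpace.expSeries_div_hasSum_exp t

lemma g_hasSum (t : ℝ) : HasSum (fun k : ℕ => t ^ (k+1) / ((k+1).factorial : ℝ)
    + 2 * (t ^ k / k.factorial)) (exp t - 1 + 2 * exp t) := by
  refine HasSum.add ?_ ((exp_hasSum t).mul_left 2)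
  have := (hasSum_nat_add_iff' (f := fun k : ℕ => t ^ k / (k.factorial : ℝ)) 1).2 (exp_hasSum t)
  simpa using this

lemma sum_upper (n : ℕ) (hn : 2 ≤ n) (α b t : ℝ) (hα : 1 / (n:ℝ) ≤ α) (hb : 1 ≤ b) (ht : 0 < t) :
    Summable (fun j : ℕ => t ^ (α * j + (b-1)) / Gamma (α * j + b)) ∧
    ∑' j : ℕ, t ^ (α * j + (b-1)) / Gamma (α * j + b) ≤ 3 * n * exp t := by
  have hn0 : (0:ℝ) < n := by positivity
  have hα0 : 0 < α := lt_of_lt_of_le (by positivity) hα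
  have hαn : 1 ≤ α * n := by rwa [div_le_iff₀ hn0] at hα
  set g : ℕ → ℝ := fun k : ℕ => t ^ (k+1) / ((k+1).factorial : ℝ)
    + 2 * (t ^ k / k.factorial) with hg
  have hg0 : ∀ k, 0 ≤ g k := fun k => by simp only [hg]; positivity
  have hgs := g_hasSum t
  let G : ℕ × Fin n → ℝ := fun p => g p.1 * 1
  have hGs : Summable G := Summable.mul_of_nonneg (f := g) (g := fun _ : Fin n => (1:ℝ)) hgs.summable
    (Summable.of_finite) hg0 (fun _ => zero_le_one)
  have hG0 : ∀ p, 0 ≤ G p := fun p => by simp only [G, mul_one]; exact hg0 _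
  have hGt : ∑' p, G p = n * (exp t - 1 + 2 * exp t) := by
    rw [hGs.tsum_prod]
    simp only [G, mul_one, tsum_fintype, Finset.sum_const, Finset.card_univ, Fintype.card_fin,
      nsmul_eq_mul]
    rw [tsum_mul_left, hgs.tsum_eq]
  let φ : ℕ → ℕ × Fin n := fun j => (⌊α * j + (b-1)⌋₊, ⟨j % n, Nat.mod_lt _ (by omega)⟩)
  have key : ∀ i j : ℕ, i < j → φ i ≠ φ j := by
    intro i j hij h
    simp only [φ, Prod.mk.injEq, Fin.mk.injEq] at h
    obtain ⟨h1, h2⟩ := h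
    have h3 : i + n ≤ j := by
      have := (Nat.modEq_iff_dvd' hij.le).1 h2
      have := Nat.le_of_dvd (by omega) this
      omega
    have h4 : α * i + (b-1) + 1 ≤ α * j + (b-1) := by
      have : ((i:ℝ) + n) ≤ j := by exact_mod_cast h3
      nlinarith
    have h5 := Nat.floor_le_floor h4
    rw [Nat.floor_add_one (by have : 0 ≤ α * i := by positivity
                              linarith)] at h5
    omega
  have hφ : Function.Injective φ := by
    intro i j h
    rcases lt_trichotomy i j with h' | h' | h'
    · exact absurd h (key i j h')
    · exact h'
    · exact absurd h.symm (key j i h')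
  have hle : ∀ j : ℕ, t ^ (α * j + (b-1)) / Gamma (α * j + b) ≤ (G ∘ φ) j := by
    intro j
    have h0 : 0 ≤ α * j + (b-1) := by have : 0 ≤ α * j := by positivity
                                      linarith
    have := term_upper t (α * j + (b-1)) ht _ (Nat.floor_le h0) (Nat.lt_floor_add_one _)
    simp only [Function.comp, G, φ, mul_one, hg]
    convert! this using 3
    ring
  have h0 : ∀ j : ℕ, 0 ≤ t ^ (α * j + (b-1)) / Gamma (α * j + b) := by
    intro j
    have : 0 < Gamma (α * j + b) := Gamma_pos_of_pos (by positivity)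
    positivity
  have hS : Summable (G ∘ φ) := hGs.comp_injective hφ
  have hS' := Summable.of_nonneg_of_le h0 hle hS
  refine ⟨hS', (hS'.tsum_le_tsum hle hS).trans ((tsum_comp_le_tsum_of_inj hGs hG0 hφ).trans ?_)⟩
  rw [hGt]
  nlinarith [exp_pos t]

lemma ML_summable (n : ℕ) (hn : 2 ≤ n) (α b : ℝ) (hα : 1 / (n:ℝ) ≤ α) (hb : 0 < b) (z : ℝ) :
    Summable (fun j : ℕ => ‖z ^ j / Gamma (α * j + b)‖) := by
  have hn0 : (0:ℝ) < n := by positivity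
  have hα0 : 0 < α := lt_of_lt_of_le (by positivity) hα
  have hαn : 1 ≤ α * n := by rwa [div_le_iff₀ hn0] at hα
  have key : ∀ b : ℝ, 1 ≤ b → ∀ z : ℝ, 0 < z → Summable (fun j : ℕ => z ^ j / Gamma (α * j + b)) := by
    intro b hb z hz
    have ht : 0 < z ^ (1/α) := by positivity
    have := (sum_upper n hn α b (z ^ (1/α)) hα hb ht).1.mul_left ((z ^ (1/α)) ^ (-(b-1)))
    convert! this using 2 with j
    rw [← mul_div_assoc, ← rpow_add ht, ← rpow_mul hz.le]
    rw [show 1 / α * (-(b-1) + (α * j + (b-1))) = j by field_simp; ring, rpow_natCast]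
  have key2 : Summable (fun j : ℕ => (|z|+1) ^ j / Gamma (α * j + b)) := by
    rw [← summable_nat_add_iff n]
    have := (key (α * n + b) (by linarith) (|z|+1) (by positivity)).mul_left ((|z|+1)^n)
    convert! this using 2 with j
    push_cast
    rw [← mul_div_assoc, ← pow_add]
    congr 2 <;> ring
  refine Summable.of_nonneg_of_le (fun _ => norm_nonneg _) (fun j => ?_) key2
  have : 0 < Gamma (α * j + b) := Gamma_pos_of_pos (by positivity)
  rw [norm_div, norm_pow, Real.norm_of_nonneg this.le, Real.norm_eq_abs]
  gcongr
  linarith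

lemma ML_upper (n : ℕ) (hn : 2 ≤ n) (α t : ℝ) (hα : 1 / (n:ℝ) ≤ α) (ht : 0 < t) :
    ML α 1 (t ^ α) ≤ 3 * n * exp t := by
  have := (sum_upper n hn α 1 t hα le_rfl ht).2
  convert! this using 1
  unfold ML
  congr 1; ext j
  rw [← rpow_natCast, ← rpow_mul ht.le]; simp

lemma ML_lower (n : ℕ) (hn : 2 ≤ n) (α t : ℝ) (hα : 1 / (n:ℝ) ≤ α) (hα1 : α < 1) (ht : 1 ≤ t) :
    exp t / 3 ≤ ML α 1 (t ^ α) := by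
  have hn0 : (0:ℝ) < n := by positivity
  have hα0 : 0 < α := lt_of_lt_of_le (by positivity) hα
  have ht0 : 0 < t := by linarith
  set f : ℕ → ℝ := fun j => t ^ (α * j) / Gamma (α * j + 1) with hf
  have hfs : Summable f := by
    have := (sum_upper n hn α 1 t hα le_rfl ht0).1
    simpa using this
  have hML : ML α 1 (t^α) = ∑' j, f j := by
    unfold ML
    congr 1; ext j
    rw [← rpow_natCast, ← rpow_mul ht0.le]
  have hf0 : ∀ j, 0 ≤ f j := by
    intro j
    have : 0 < Gamma (α * j + 1) := Gamma_pos_of_pos (by positivity)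
    simp only [hf]; positivity
  let ψ : ℕ → ℕ := fun k => ⌈(k:ℝ)/α⌉₊
  have hψ1 : ∀ k : ℕ, (k:ℝ) ≤ α * ψ k := by
    intro k
    have := Nat.le_ceil ((k:ℝ)/α)
    rw [div_le_iff₀ hα0] at this
    linarith [mul_comm α (ψ k : ℝ)]
  have hψ2 : ∀ k : ℕ, α * ψ k < k + 1 := by
    intro k
    have := Nat.ceil_lt_add_one (a := (k:ℝ)/α) (by positivity)
    have h2 : α * ψ k < α * ((k:ℝ)/α + 1) := by gcongr
    rw [mul_add, mul_div_cancel₀ _ hα0.ne'] at h2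
    linarith
  have hψ : Function.Injective ψ := by
    intro i j h
    have a1 := hψ1 i
    have a2 := hψ2 i
    have a3 := hψ1 j
    have a4 := hψ2 j
    rw [h] at a1 a2
    have : (i:ℝ) < j + 1 := by linarith
    have : (j:ℝ) < i + 1 := by linarith
    have h1 : i < j + 1 := by exact_mod_cast ‹(i:ℝ) < j + 1›
    have h2 : j < i + 1 := by exact_mod_cast this
    omega
  rw [hML]
  refine le_trans ?_ (tsum_comp_le_tsum_of_inj hfs hf0 hψ)
  -- linear lower bound
  have hlin : HasSum (fun k : ℕ => (t^k/(k.factorial:ℝ)) * (t * (2/(2*t+1) - (t+1)/(2*t+1)^2))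
      - t/(2*t+1)^2 * (t^k/(k.factorial:ℝ) * k)) (exp t * (t * (2/(2*t+1) - (t+1)/(2*t+1)^2))
      - t/(2*t+1)^2 * (t * exp t)) := by
    refine ((exp_hasSum t).mul_right _).sub (HasSum.mul_left _ ?_)
    rw [← hasSum_nat_add_iff' 1]
    simp only [Finset.sum_range_one, Nat.cast_zero, mul_zero, sub_zero]
    convert! (exp_hasSum t).mul_left t using 2 with k
    rw [Nat.factorial_succ]; push_cast; field_simp
    exact pow_succ' _ _
  have hval : exp t / 3 ≤ exp t * (t * (2/(2*t+1) - (t+1)/(2*t+1)^2))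
      - t/(2*t+1)^2 * (t * exp t) := by
    have : exp t * (t * (2/(2*t+1) - (t+1)/(2*t+1)^2)) - t/(2*t+1)^2 * (t * exp t)
      = exp t * (t / (2*t+1)) := by field_simp; ring
    rw [this, div_eq_mul_inv]
    apply mul_le_mul_of_nonneg_left _ (exp_pos t).le
    rw [inv_eq_one_div, div_le_div_iff₀ (by norm_num) (by positivity)]
    linarith
  refine hval.trans ?_
  rw [← hlin.tsum_eq]
  refine hlin.summable.tsum_le_tsum (fun k => ?_) (hfs.comp_injective hψ)
  refine le_trans ?_ (term_lower t (α * ψ k) ht0 k (hψ1 k) (hψ2 k))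
  have e : (t^k/(k.factorial:ℝ)) * (t * (2/(2*t+1) - (t+1)/(2*t+1)^2))
      - t/(2*t+1)^2 * (t^k/(k.factorial:ℝ) * k) = (t^k/(k.factorial:ℝ)) *
      (t * (2/(2*t+1) - (t+k+1)/(2*t+1)^2)) := by ring
  rw [e]
  apply mul_le_mul_of_nonneg_left _ (by positivity)
  rw [div_eq_mul_inv t]
  apply mul_le_mul_of_nonneg_left _ ht0.le
  have hw : 0 < t + k + 1 := by positivity
  have hw0 : 0 < 2 * t + 1 := by positivity
  have : (t+k+1)⁻¹ - (2/(2*t+1) - (t+k+1)/(2*t+1)^2) = (t+k+1 - (2*t+1))^2 / ((t+k+1) * (2*t+1)^2) := by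
    field_simp; ring
  have h2 : 0 ≤ (t+k+1 - (2*t+1))^2 / ((t+k+1) * (2*t+1)^2) := by positivity
  linarith

lemma ML_continuous (n : ℕ) (hn : 2 ≤ n) (α b : ℝ) (hα : 1 / (n:ℝ) ≤ α) (hb : 0 < b) :
    Continuous (ML α b) := by
  have hn0 : (0:ℝ) < n := by positivity
  have hα0 : 0 < α := lt_of_lt_of_le (by positivity) hα
  rw [continuous_iff_continuousAt]
  intro z
  have : ContinuousOn (ML α b) (Set.Icc (-(|z|+1)) (|z|+1)) := by
    refine continuousOn_tsum (fun j => by fun_prop) (ML_summable n hn α b hα hb (|z|+1)) ?_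
    intro j w hw
    rw [norm_div, norm_div]
    gcongr
    rw [norm_pow, norm_pow]
    gcongr
    rw [Real.norm_eq_abs, Real.norm_of_nonneg (by positivity)]
    exact abs_le.2 hw
  exact this.continuousAt (Icc_mem_nhds (by linarith [neg_abs_le z]) (by linarith [le_abs_self z]))

lemma ML_mono (n : ℕ) (hn : 2 ≤ n) (α : ℝ) (hα : 1 / (n:ℝ) ≤ α) {z w : ℝ} (hz : 0 ≤ z)
    (hzw : z ≤ w) : ML α 1 z ≤ ML α 1 w := by
  have hn0 : (0:ℝ) < n := by positivity
  have hα0 : 0 < α := lt_of_lt_of_le (by positivity) hα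
  refine (ML_summable n hn α 1 hα one_pos z).of_norm.tsum_le_tsum (fun j => ?_)
    (ML_summable n hn α 1 hα one_pos w).of_norm
  have : 0 < Gamma (α * j + 1) := Gamma_pos_of_pos (by positivity)
  gcongr

lemma ML_nonneg (α : ℝ) (hα0 : 0 < α) {z : ℝ} (hz : 0 ≤ z) : 0 ≤ ML α 1 z := by
  refine tsum_nonneg (fun j => ?_)
  have : 0 < Gamma (α * j + 1) := Gamma_pos_of_pos (by positivity)
  positivity

lemma ML_rec (n : ℕ) (hn : 2 ≤ n) (α b : ℝ) (hα : 1 / (n:ℝ) ≤ α) (hb : 0 < b) (z : ℝ) :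
    ML α b z = 1 / Gamma b + z * ML α (b+α) z := by
  unfold ML
  rw [(ML_summable n hn α b hα hb z).of_norm.tsum_eq_zero_add, ← tsum_mul_left]
  congr 1
  · simp
  · congr 1; ext j
    push_cast
    rw [pow_succ', mul_div_assoc]
    congr 3; ring

lemma beta_real (p q t : ℝ) (hp : 0 < p) (hq : 0 < q) (ht : 0 < t) :
    IntervalIntegrable (fun s : ℝ => (t - s) ^ (q - 1) * s ^ (p - 1)) volume 0 t ∧
    ∫ s in (0:ℝ)..t, (t - s) ^ (q - 1) * s ^ (p - 1) =
      t ^ (p + q - 1) * (Gamma p * Gamma q / Gamma (p + q)) := by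
  have hval : ∫ s in (0:ℝ)..t, (t - s) ^ (q - 1) * s ^ (p - 1) =
      t ^ (p + q - 1) * (Gamma p * Gamma q / Gamma (p + q)) := by
    have h1 := Complex.betaIntegral_scaled (p:ℂ) (q:ℂ) ht
    rw [Complex.betaIntegral_eq_Gamma_mul_div _ _ (by simpa) (by simpa)] at h1
    have h2 : ∫ x in (0:ℝ)..t, (x:ℂ) ^ ((p:ℂ) - 1) * ((t:ℂ) - x) ^ ((q:ℂ) - 1)
        = ((∫ s in (0:ℝ)..t, (t - s) ^ (q - 1) * s ^ (p - 1) : ℝ) : ℂ) := by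
      rw [← intervalIntegral.integral_ofReal]
      apply intervalIntegral.integral_congr
      intro x hx
      rw [Set.uIcc_of_le ht.le] at hx
      simp only
      push_cast
      rw [Complex.ofReal_cpow (by linarith [hx.2] : 0 ≤ t - x), Complex.ofReal_cpow hx.1]
      push_cast
      ring
    rw [h2] at h1
    apply_fun Complex.re at h1
    rw [Complex.ofReal_re] at h1
    rw [h1, ← Complex.ofReal_add, Complex.Gamma_ofReal, Complex.Gamma_ofReal, Complex.Gamma_ofReal]
    rw [show ((p + q : ℝ) : ℂ) - 1 = ((p + q - 1 : ℝ) : ℂ) by push_cast; ring,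
      ← Complex.ofReal_cpow ht.le]
    norm_cast
  refine ⟨?_, hval⟩
  apply intervalIntegral.intervalIntegrable_of_integral_ne_zero
  rw [hval]
  have := Gamma_pos_of_pos hp
  have := Gamma_pos_of_pos hq
  have := Gamma_pos_of_pos (add_pos hp hq)
  positivity

lemma frac_integrable (n : ℕ) (hn : 2 ≤ n) (α b γ t : ℝ) (hα : 1 / (n:ℝ) ≤ α) (hb : 0 < b)
    (hγ : 0 < γ) (ht : 0 < t) :
    IntervalIntegrable (fun s : ℝ => (t - s) ^ (γ - 1) * (s ^ (b - 1) * ML α b (-s ^ α))) volume 0 t := by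
  have hn0 : (0:ℝ) < n := by positivity
  have hα0 : 0 < α := lt_of_lt_of_le (by positivity) hα
  have h := (beta_real b γ t hb hγ ht).1
  have hc : Continuous (fun s : ℝ => ML α b (-s ^ α)) :=
    (ML_continuous n hn α b hα hb).comp (Real.continuous_rpow_const hα0.le).neg
  have := h.mul_continuousOn hc.continuousOn
  simpa only [mul_assoc] using this

lemma frac_int (n : ℕ) (hn : 2 ≤ n) (α b γ t : ℝ) (hα : 1 / (n:ℝ) ≤ α) (hb : 0 < b)
    (hγ : 0 < γ) (ht : 0 < t) :
    ∫ s in (0:ℝ)..t, (t - s) ^ (γ - 1) * (s ^ (b - 1) * ML α b (-s ^ α)) =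
      Gamma γ * (t ^ (b + γ - 1) * ML α (b + γ) (-t ^ α)) := by
  have hn0 : (0:ℝ) < n := by positivity
  have hα0 : 0 < α := lt_of_lt_of_le (by positivity) hα
  let F : ℕ → ℝ → ℝ := fun j s => ((-1)^j / Gamma (α * j + b)) * ((t - s) ^ (γ - 1) * s ^ (α * j + b - 1))
  have hbp : ∀ j : ℕ, 0 < α * j + b := fun j => by positivity
  have hGp : ∀ j : ℕ, 0 < Gamma (α * j + b) := fun j => Gamma_pos_of_pos (hbp j)
  have hGp2 : ∀ j : ℕ, 0 < Gamma (α * j + (b+γ)) := fun j => Gamma_pos_of_pos (by positivity)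
  have hF1 : ∀ j, Integrable (F j) (volume.restrict (Set.Ioc 0 t)) := by
    intro j
    have := (beta_real (α * j + b) γ t (hbp j) hγ ht).1.const_mul ((-1)^j / Gamma (α * j + b))
    rwa [intervalIntegrable_iff_integrableOn_Ioc_of_le ht.le] at this
  have hpow : ∀ j : ℕ, t ^ (α * j + b + γ - 1) = t ^ (b + γ - 1) * (t ^ α) ^ j := by
    intro j
    rw [← rpow_natCast, ← rpow_mul ht.le, ← rpow_add ht]; congr 1; ring
  have hF2 : ∀ j, ∫ s in Set.Ioc 0 t, F j s =
      Gamma γ * t ^ (b + γ - 1) * ((-t ^ α) ^ j / Gamma (α * j + (b + γ))) := by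
    intro j
    rw [← intervalIntegral.integral_of_le ht.le, intervalIntegral.integral_const_mul,
      (beta_real (α * j + b) γ t (hbp j) hγ ht).2, hpow, neg_pow (t ^ α), add_assoc]
    have := (hGp j).ne'
    have := (hGp2 j).ne'
    field_simp
  have hF3 : ∀ j, ∫ s in Set.Ioc 0 t, ‖F j s‖ =
      Gamma γ * t ^ (b + γ - 1) * ‖(t ^ α) ^ j / Gamma (α * j + (b + γ))‖ := by
    intro j
    have : ∫ s in Set.Ioc 0 t, ‖F j s‖ = ∫ s in Set.Ioc 0 t,
        (1 / Gamma (α * j + b)) * ((t - s) ^ (γ - 1) * s ^ (α * j + b - 1)) := by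
      apply setIntegral_congr_fun measurableSet_Ioc
      intro s hs
      simp only [F]
      have h1 : 0 ≤ (t - s) ^ (γ - 1) := rpow_nonneg (by linarith [hs.2]) _
      have h2 : 0 ≤ s ^ (α * j + b - 1) := rpow_nonneg (by linarith [hs.1]) _
      rw [norm_mul, norm_div, norm_pow, Real.norm_of_nonneg (mul_nonneg h1 h2),
        Real.norm_of_nonneg (hGp j).le]
      simp
    rw [this, ← intervalIntegral.integral_of_le ht.le, intervalIntegral.integral_const_mul,
      (beta_real (α * j + b) γ t (hbp j) hγ ht).2, hpow, add_assoc,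
      Real.norm_of_nonneg (div_nonneg (by positivity) (hGp2 j).le)]
    have := (hGp j).ne'
    have := (hGp2 j).ne'
    field_simp
  have hs := hasSum_integral_of_summable_integral_norm hF1 (by
    simp_rw [hF3]
    exact (ML_summable n hn α (b+γ) hα (by positivity) (t ^ α)).mul_left _)
  simp_rw [hF2] at hs
  have h4 := hs.tsum_eq
  rw [tsum_mul_left] at h4
  rw [intervalIntegral.integral_of_le ht.le, ← mul_assoc]
  unfold ML at *
  rw [h4]
  apply setIntegral_congr_fun measurableSet_Ioc
  intro s hs
  simp only [F]
  rw [← tsum_mul_left, ← tsum_mul_left]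
  congr 1; ext j
  have : s ^ (α * j + b - 1) = s ^ (b-1) * (s ^ α) ^ j := by
    rw [← rpow_natCast, ← rpow_mul hs.1.le, ← rpow_add hs.1]; congr 1; ring
  rw [this, neg_pow (s ^ α)]
  ring

lemma volterra (n : ℕ) (hn : 2 ≤ n) (α b t : ℝ) (hα : 1 / (n:ℝ) ≤ α) (hb : 0 < b) (ht : 0 < t) :
    t ^ (b - 1) * ML α b (-t ^ α) = t ^ (b-1) / Gamma b -
      1 / Gamma α * ∫ s in (0:ℝ)..t, (t - s) ^ (α - 1) * (s ^ (b - 1) * ML α b (-s ^ α)) := by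
  have hn0 : (0:ℝ) < n := by positivity
  have hα0 : 0 < α := lt_of_lt_of_le (by positivity) hα
  rw [frac_int n hn α b α t hα hb hα0 ht, ML_rec n hn α b hα hb]
  have : t ^ (b + α - 1) = t ^ (b-1) * t ^ α := by rw [← rpow_add ht]; congr 1; ring
  rw [this]
  have := (Gamma_pos_of_pos hα0).ne'
  field_simp
  ring

lemma kernel_int (a t0 t : ℝ) (ha : 0 < a) :
    IntervalIntegrable (fun s : ℝ => (t0 - s) ^ (a - 1)) volume t t0 ∧
    ∫ s in t..t0, (t0 - s) ^ (a - 1) = (t0 - t) ^ a / a := by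
  constructor
  · have := (intervalIntegral.intervalIntegrable_rpow' (a := 0) (b := t0 - t) (r := a - 1) (by linarith)).comp_sub_left t0
    simpa using this.symm
  · rw [intervalIntegral.integral_comp_sub_left (fun x => x ^ (a-1)), integral_rpow (by left; linarith)]
    simp [ha.ne']

lemma ML_pos (n : ℕ) (hn : 2 ≤ n) (α b : ℝ) (hα : 1 / (n:ℝ) ≤ α) (hα1 : α < 1) (hb : α ≤ b)
    (t : ℝ) (ht : 0 ≤ t) : 0 < ML α b (-t ^ α) := by
  have hn0 : (0:ℝ) < n := by positivity
  have hα0 : 0 < α := lt_of_lt_of_le (by positivity) hα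
  have hb0 : 0 < b := by linarith
  have hGb := Gamma_pos_of_pos hb0
  have hGα := Gamma_pos_of_pos hα0
  by_contra hcon
  push Not at hcon
  set f : ℝ → ℝ := fun s => ML α b (-s ^ α) with hf
  have hc : Continuous f :=
    (ML_continuous n hn α b hα hb0).comp (Real.continuous_rpow_const hα0.le).neg
  have hf0 : 0 < f 0 := by
    simp only [hf]
    rw [ML_rec n hn α b hα hb0, zero_rpow hα0.ne']
    simp [hGb]
  let S : Set ℝ := {s | 0 ≤ s ∧ f s ≤ 0}
  have hSc : IsClosed S := (isClosed_le continuous_const continuous_id).inter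
    (isClosed_le hc continuous_const)
  have hSb : BddBelow S := ⟨0, fun s hs => hs.1⟩
  have hSn : S.Nonempty := ⟨t, ht, hcon⟩
  set t0 := sInf S with ht0def
  have ht0S : t0 ∈ S := hSc.csInf_mem hSn hSb
  have ht0 : 0 < t0 := by
    rcases ht0S.1.eq_or_lt with h | h
    · have := ht0S.2
      rw [← h] at this; linarith
    · exact h
  have hpos : ∀ s, 0 ≤ s → s < t0 → 0 < f s := by
    intro s hs hst
    by_contra h
    push Not at h
    exact absurd (csInf_le hSb ⟨hs, h⟩) (not_le.2 hst)
  set g : ℝ → ℝ := fun s => s ^ (b-1) * f s with hg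
  have hV : ∀ t, 0 < t → g t = t ^ (b-1) / Gamma b -
      1 / Gamma α * ∫ s in (0:ℝ)..t, (t - s) ^ (α - 1) * g s :=
    fun t ht => volterra n hn α b t hα hb0 ht
  have hI : ∀ t, 0 < t → IntervalIntegrable (fun s : ℝ => (t - s) ^ (α - 1) * g s) volume 0 t :=
    fun t ht => frac_integrable n hn α b α t hα hb0 hα0 ht
  have hgpos : ∀ s, 0 < s → s < t0 → 0 < g s := fun s h1 h2 =>
    mul_pos (rpow_pos_of_pos h1 _) (hpos s h1.le h2)
  have hg0 : g t0 ≤ 0 := mul_nonpos_of_nonneg_of_nonpos (rpow_nonneg ht0.le _) ht0S.2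
  -- choice of δ
  obtain ⟨δ, hδ0, hδ1, hδ2⟩ : ∃ δ : ℝ, 0 < δ ∧ δ ≤ t0 / 2 ∧ δ ^ α ≤ α * Gamma α / 4 := by
    refine ⟨min (t0/2) ((α * Gamma α / 4) ^ (1/α)), by positivity, min_le_left _ _, ?_⟩
    calc _ ≤ ((α * Gamma α / 4) ^ (1/α)) ^ α := by
            apply rpow_le_rpow (by positivity) (min_le_right _ _) hα0.le
      _ = _ := by rw [← rpow_mul (by positivity), one_div_mul_cancel hα0.ne', rpow_one]
  have hgc : ContinuousOn g (Set.Icc (t0 - δ) t0) := by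
    apply ContinuousOn.mul _ hc.continuousOn
    apply ContinuousOn.rpow_const continuousOn_id
    intro s hs
    left
    simp only [id]
    linarith [hs.1]
  obtain ⟨t1, ht1, hmax⟩ := isCompact_Icc.exists_isMaxOn (Set.nonempty_Icc.2 (by linarith)) hgc
  have hmax' : ∀ s ∈ Set.Icc (t0 - δ) t0, g s ≤ g t1 := hmax
  have ht1pos : 0 < t1 := by linarith [ht1.1]
  have hg1 : 0 < g t1 := lt_of_lt_of_le (hgpos (t0 - δ) (by linarith) (by linarith))
    (hmax' _ ⟨le_rfl, by linarith⟩)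
  have ht10 : t1 < t0 := by
    rcases ht1.2.eq_or_lt with h | h
    · rw [h] at hg1; linarith
    · exact h
  have hsub1 : IntervalIntegrable (fun s : ℝ => (t0 - s) ^ (α - 1) * g s) volume 0 t1 := by
    apply (hI t0 ht0).mono_set
    rw [Set.uIcc_of_le ht1pos.le, Set.uIcc_of_le ht0.le]
    exact Set.Icc_subset_Icc_right ht10.le
  have hsub2 : IntervalIntegrable (fun s : ℝ => (t0 - s) ^ (α - 1) * g s) volume t1 t0 := by
    apply (hI t0 ht0).mono_set
    rw [Set.uIcc_of_le ht10.le, Set.uIcc_of_le ht0.le]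
    exact Set.Icc_subset_Icc_left ht1pos.le
  have hsplit := intervalIntegral.integral_add_adjacent_intervals hsub1 hsub2
  have hA : ∫ s in (0:ℝ)..t1, (t0 - s) ^ (α - 1) * g s ≤
      (t0/t1)^(α-1) * ∫ s in (0:ℝ)..t1, (t1 - s) ^ (α - 1) * g s := by
    rw [← intervalIntegral.integral_const_mul]
    apply intervalIntegral.integral_mono_on_of_le_Ioo ht1pos.le hsub1 ((hI t1 ht1pos).const_mul _)
    intro s hs
    rw [← mul_assoc ((t0/t1)^(α-1))]
    apply mul_le_mul_of_nonneg_right _ (hgpos s hs.1 (hs.2.trans ht10)).le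
    have h1 : 0 < t1 - s := by linarith [hs.2]
    rw [← mul_rpow (by positivity) h1.le]
    apply rpow_le_rpow_of_nonpos (by positivity) _ (by linarith)
    rw [div_mul_eq_mul_div, div_le_iff₀ ht1pos]
    nlinarith [hs.1]
  have hB : ∫ s in t1..t0, (t0 - s) ^ (α - 1) * g s ≤ g t1 * ((t0 - t1) ^ α / α) := by
    rw [← (kernel_int α t0 t1 hα0).2, ← intervalIntegral.integral_const_mul]
    apply intervalIntegral.integral_mono_on ht10.le hsub2 ((kernel_int α t0 t1 hα0).1.const_mul _)
    intro s hs
    rw [mul_comm]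
    apply mul_le_mul_of_nonneg_right (hmax' s ⟨by linarith [hs.1, ht1.1], hs.2⟩)
    exact rpow_nonneg (by linarith [hs.2]) _
  set c := (t0/t1)^(α-1) with hcdef
  have hc2 : 1/2 ≤ c := by
    have h2 : 1 ≤ t0 / t1 := by rw [le_div_iff₀ ht1pos]; linarith
    have h3 : t0 / t1 ≤ 2 := by rw [div_le_iff₀ ht1pos]; linarith [ht1.1]
    calc (1/2 : ℝ) = 2 ^ (-1 : ℝ) := by rw [rpow_neg_one]; norm_num
      _ ≤ (t0/t1) ^ (-1:ℝ) := rpow_le_rpow_of_nonpos (by linarith) h3 (by norm_num)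
      _ ≤ c := rpow_le_rpow_of_exponent_le h2 (by linarith)
  have hc3 : c * t1 ^ (b-1) ≤ t0 ^ (b-1) := by
    have h2 : 1 ≤ t0 / t1 := by rw [le_div_iff₀ ht1pos]; linarith
    have : t0 ^ (b-1) = (t0/t1)^(b-1) * t1 ^ (b-1) := by
      rw [← mul_rpow (by positivity) ht1pos.le, div_mul_cancel₀ _ ht1pos.ne']
    rw [this]
    apply mul_le_mul_of_nonneg_right _ (by positivity)
    exact rpow_le_rpow_of_exponent_le h2 (by linarith)
  have hd : (t0 - t1) ^ α ≤ α * Gamma α / 4 :=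
    (rpow_le_rpow (by linarith) (by linarith [ht1.1]) hα0.le).trans hδ2
  have e0 := hV t0 ht0
  have e1 := hV t1 ht1pos
  rw [← hsplit] at e0
  set A := ∫ s in (0:ℝ)..t1, (t0 - s) ^ (α - 1) * g s
  set B := ∫ s in t1..t0, (t0 - s) ^ (α - 1) * g s
  set J := ∫ s in (0:ℝ)..t1, (t1 - s) ^ (α - 1) * g s
  have hB' : 1 / Gamma α * B ≤ g t1 / 4 := by
    have : B ≤ g t1 * ((α * Gamma α / 4) / α) := hB.trans (by gcongr)
    calc 1 / Gamma α * B ≤ 1 / Gamma α * (g t1 * ((α * Gamma α / 4) / α)) := by gcongr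
      _ = _ := by field_simp
  have hA' : 1 / Gamma α * A ≤ c * (1 / Gamma α * J) := by
    calc 1 / Gamma α * A ≤ 1 / Gamma α * (c * J) := by gcongr
      _ = _ := by ring
  have hJ : 1 / Gamma α * J = t1 ^ (b-1) / Gamma b - g t1 := by linarith
  have hc4 : c * (t1 ^ (b-1) / Gamma b) ≤ t0 ^ (b-1) / Gamma b := by
    rw [← mul_div_assoc]; gcongr
  rw [hJ] at hA'
  have : 1/2 * g t1 ≤ c * g t1 := by gcongr
  have e2 : g t0 = t0 ^ (b-1) / Gamma b - (1 / Gamma α * A + 1 / Gamma α * B) := by rw [e0]; ring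
  nlinarith

lemma ML_neg_bounds (n : ℕ) (hn : 2 ≤ n) (α : ℝ) (hα : 1 / (n:ℝ) ≤ α) (hα1 : α < 1)
    (z : ℝ) (hz : 0 < z) :
    0 ≤ ML α 1 (-z) ∧ ML α 1 (-z) ≤ 1 ∧ ML α 1 (-z) * z ≤ α * Gamma α := by
  have hn0 : (0:ℝ) < n := by positivity
  have hα0 : 0 < α := lt_of_lt_of_le (by positivity) hα
  have hGα := Gamma_pos_of_pos hα0
  set y : ℝ → ℝ := fun s => ML α 1 (-s ^ α) with hy
  have hy0 : ∀ s, 0 ≤ s → 0 < y s := fun s hs => ML_pos n hn α 1 hα hα1 hα1.le s hs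
  have hint : ∀ t, 0 < t → IntervalIntegrable (fun s : ℝ => s ^ (α-1) * ML α α (-s ^ α)) volume 0 t := by
    intro t ht
    simpa using frac_integrable n hn α α 1 t hα hα0 one_pos ht
  have hyi : ∀ t, 0 < t → y t = 1 - ∫ s in (0:ℝ)..t, s ^ (α-1) * ML α α (-s ^ α) := by
    intro t ht
    have h1 := frac_int n hn α α 1 t hα hα0 one_pos ht
    simp only [sub_self, rpow_zero, one_mul, Real.Gamma_one, add_sub_cancel_right] at h1
    rw [h1]
    simp only [hy]
    rw [ML_rec n hn α 1 hα one_pos, Real.Gamma_one, add_comm 1 α]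
    ring
  have hanti : ∀ s t, 0 < s → s ≤ t → y t ≤ y s := by
    intro s t hs hst
    have ht : 0 < t := by linarith
    rw [hyi s hs, hyi t ht]
    have hst' : IntervalIntegrable (fun s : ℝ => s ^ (α-1) * ML α α (-s ^ α)) volume s t := by
      apply (hint t ht).mono_set
      rw [Set.uIcc_of_le hst, Set.uIcc_of_le ht.le]
      exact Set.Icc_subset_Icc_left hs.le
    have := intervalIntegral.integral_add_adjacent_intervals (hint s hs) hst'
    have h2 : 0 ≤ ∫ s in s..t, s ^ (α-1) * ML α α (-s ^ α) := by
      apply intervalIntegral.integral_nonneg hst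
      intro r hr
      have hr0 : 0 ≤ r := by linarith [hr.1]
      exact mul_nonneg (rpow_nonneg hr0 _) (ML_pos n hn α α hα hα1 le_rfl r hr0).le
    linarith
  set t := z ^ (1/α) with htdef
  have ht : 0 < t := by positivity
  have hzt : z = t ^ α := by rw [htdef, ← rpow_mul hz.le]; field_simp; simp
  have hv := volterra n hn α 1 t hα one_pos ht
  simp only [sub_self, rpow_zero, one_mul, Real.Gamma_one, div_one] at hv
  have hI : IntervalIntegrable (fun s : ℝ => (t - s) ^ (α - 1) * ML α 1 (-s ^ α)) volume 0 t := by
    simpa using frac_integrable n hn α 1 α t hα one_pos hα0 ht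
  have hlow : y t * (t ^ α / α) ≤ ∫ s in (0:ℝ)..t, (t - s) ^ (α - 1) * ML α 1 (-s ^ α) := by
    have hk := kernel_int α t 0 hα0
    rw [sub_zero] at hk
    rw [← hk.2, ← intervalIntegral.integral_const_mul]
    apply intervalIntegral.integral_mono_on_of_le_Ioo ht.le (hk.1.const_mul _) hI
    intro s hs
    rw [mul_comm]
    apply mul_le_mul_of_nonneg_left (hanti s t hs.1 hs.2.le)
    exact rpow_nonneg (by linarith [hs.2]) _
  rw [hzt]
  have hyt := hy0 t ht.le
  change 0 ≤ y t ∧ y t ≤ 1 ∧ y t * t ^ α ≤ _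
  change y t = _ at hv
  set I := ∫ s in (0:ℝ)..t, (t - s) ^ (α - 1) * ML α 1 (-s ^ α)
  have hI0 : 0 ≤ y t * (t ^ α / α) := by positivity
  have hI1 : 0 ≤ 1 / Gamma α * I := mul_nonneg (by positivity) (hI0.trans hlow)
  refine ⟨hyt.le, by linarith, ?_⟩
  have h3 : 1 / Gamma α * (y t * (t^α/α)) ≤ 1 := by
    have : 1 / Gamma α * (y t * (t^α/α)) ≤ 1 / Gamma α * I := by gcongr
    linarith
  have h4 : 1 / Gamma α * (y t * (t^α/α)) = y t * t ^ α / (α * Gamma α) := by field_simp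
  rw [h4, div_le_one (by positivity)] at h3
  exact h3

set_option maxHeartbeats 2000000 in
lemma main_lower (n : ℕ) (hn : 2 ≤ n) (α ϱ t x R : ℝ) (hα : 1 / (n:ℝ) ≤ α) (hα1 : α < 1)
    (hϱ : 1 ≤ ϱ) (ht : (n:ℝ) + 1 ≤ t) (hx : 1 < x) (hax : t ^ (-(1/(2*ϱ))) ≤ 1 / x) (hR : 1 ≤ R) :
    t ^ (-(1/(2*ϱ))) * (exp (t - n) / 6) - 3 * n * exp (t * (1 - (1/x)^(2*ϱ)))
      - (4 + 2 * (α * Gamma α)) ≤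
    ∫ ξ in (0 : ℝ)..R, ML α 1 (t ^ α * (1 - ξ ^ (2 * ϱ))) * Real.cos (x * ξ) := by
  have hn0 : (0:ℝ) < n := by positivity
  have hα0 : 0 < α := lt_of_lt_of_le (by positivity) hα
  have hGα := Gamma_pos_of_pos hα0
  have hαn : 1 / α ≤ n := by
    rw [div_le_iff₀ hα0]; rw [div_le_iff₀ hn0] at hα; linarith [mul_comm α (n:ℝ)]
  have hα1' : 1 ≤ 1 / α := by rw [le_div_iff₀ hα0]; linarith
  have ht0 : 0 < t := by linarith
  have ht1 : 1 ≤ t := by linarith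
  have hx0 : 0 < x := by linarith
  set a := t ^ (-(1/(2*ϱ))) with ha
  have ha0 : 0 < a := by positivity
  set b := 1 / x with hb
  have hb0 : 0 < b := by positivity
  have hb1 : b < 1 := by rw [hb, div_lt_one hx0]; exact hx
  have hxb : x * b = 1 := by rw [hb]; field_simp
  have hϱ0 : 0 < 2 * ϱ := by linarith
  set h : ℝ → ℝ := fun ξ => ML α 1 (t ^ α * (1 - ξ ^ (2 * ϱ))) * Real.cos (x * ξ) with hh
  have hcont : Continuous h := by
    have h1 : Continuous (fun ξ : ℝ => t ^ α * (1 - ξ ^ (2 * ϱ))) :=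
      continuous_const.mul (continuous_const.sub (Real.continuous_rpow_const hϱ0.le))
    exact ((ML_continuous n hn α 1 hα one_pos).comp h1).mul (by fun_prop)
  have hii : ∀ p q : ℝ, IntervalIntegrable h volume p q := fun p q => hcont.intervalIntegrable p q
  have hscale : ∀ w : ℝ, 0 ≤ w → (t * w ^ (1/α)) ^ α = t ^ α * w := by
    intro w hw
    rw [mul_rpow ht0.le (by positivity), ← rpow_mul hw, one_div_mul_cancel hα0.ne', rpow_one]
  have htpos : 0 ≤ t ^ α := by positivity
  -- first piece
  have P1 : a * (exp (t - n) / 6) ≤ ∫ ξ in (0:ℝ)..a, h ξ := by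
    have e : ∫ ξ in (0:ℝ)..a, (exp (t - n) / 6) = a * (exp (t - n) / 6) := by simp; ring
    rw [← e]
    apply intervalIntegral.integral_mono_on ha0.le (by simp) (hii _ _)
    intro ξ hξ
    have hw0 : 0 < 1 - 1/t := by
      rw [sub_pos, div_lt_one ht0]; linarith
    have hξp : ξ ^ (2*ϱ) ≤ 1 / t := by
      calc ξ ^ (2*ϱ) ≤ a ^ (2*ϱ) := rpow_le_rpow hξ.1 hξ.2 hϱ0.le
        _ = t ^ (-1:ℝ) := by rw [ha, ← rpow_mul ht0.le]; congr 1; field_simp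
        _ = 1 / t := by rw [rpow_neg_one, one_div]
    have hML : exp (t - n) / 3 ≤ ML α 1 (t ^ α * (1 - ξ ^ (2*ϱ))) := by
      have hs : t - n ≤ t * (1 - 1/t) ^ (1/α) := by
        have h1 : (1 - 1/t) ^ (n:ℝ) ≤ (1 - 1/t) ^ (1/α) :=
          rpow_le_rpow_of_exponent_ge hw0 (by have : 0 < 1/t := by positivity
                                              linarith) hαn
        have h2 : 1 + (n:ℝ) * (-(1/t)) ≤ (1 + (-(1/t))) ^ n :=
          one_add_mul_le_pow (by linarith) n
        rw [rpow_natCast] at h1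
        rw [← sub_eq_add_neg 1 (1/t)] at h2
        have h3 : t * (1 + (n:ℝ) * (-(1/t))) ≤ t * (1 - 1/t) ^ (1/α) := by
          apply mul_le_mul_of_nonneg_left (h2.trans h1) ht0.le
        have h4 : t * (1 + (n:ℝ) * (-(1/t))) = t - n := by field_simp; ring
        linarith
      have h5 := ML_lower n hn α _ hα hα1 (by linarith : 1 ≤ t * (1 - 1/t) ^ (1/α))
      rw [hscale _ hw0.le] at h5
      have h6 : exp (t - n) ≤ exp (t * (1 - 1/t) ^ (1/α)) := exp_le_exp.2 hs
      have h7 := ML_mono n hn α hα (z := t ^ α * (1 - 1/t)) (w := t ^ α * (1 - ξ ^ (2*ϱ)))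
        (by positivity) (by gcongr)
      linarith
    have hcos : 1/2 ≤ cos (x * ξ) := by
      have h1 := Real.one_sub_sq_div_two_le_cos (x := x * ξ)
      have h2 : x * ξ ≤ 1 := by
        rw [← hxb]; exact mul_le_mul_of_nonneg_left (hξ.2.trans hax) hx0.le
      have h3 : 0 ≤ x * ξ := mul_nonneg hx0.le hξ.1
      nlinarith
    calc exp (t - n) / 6 = exp (t - n) / 3 * (1/2) := by ring
      _ ≤ h ξ := mul_le_mul hML hcos (by norm_num) (le_trans (by positivity) hML)
  have P2 : 0 ≤ ∫ ξ in a..b, h ξ := by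
    apply intervalIntegral.integral_nonneg hax
    intro ξ hξ
    have hξ0 : 0 ≤ ξ := ha0.le.trans hξ.1
    apply mul_nonneg
    · apply ML_nonneg α hα0
      apply mul_nonneg htpos
      have := rpow_le_one hξ0 (hξ.2.trans hb1.le) hϱ0.le
      linarith
    · apply Real.cos_nonneg_of_neg_pi_div_two_le_of_le
      · have : 0 ≤ x * ξ := by positivity
        linarith [Real.pi_pos]
      · have : x * ξ ≤ 1 := by
          rw [← hxb]; exact mul_le_mul_of_nonneg_left hξ.2 hx0.le
        linarith [Real.pi_gt_three]
  have P3 : -(3 * n * exp (t * (1 - b^(2*ϱ)))) ≤ ∫ ξ in b..1, h ξ := by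
    set D := 3 * n * exp (t * (1 - b^(2*ϱ))) with hD
    have hD0 : 0 < D := by positivity
    have e : ∫ ξ in b..1, (-D) = (1 - b) * (-D) := by simp
    have e2 : ∫ ξ in b..1, (-D) ≤ ∫ ξ in b..1, h ξ := by
      apply intervalIntegral.integral_mono_on hb1.le (by simp) (hii _ _)
      intro ξ hξ
      have hξ0 : 0 ≤ ξ := hb0.le.trans hξ.1
      have hw0 : 0 < 1 - b^(2*ϱ) := by
        have := rpow_lt_one hb0.le hb1 hϱ0
        linarith
      have hξ1 := rpow_le_one hξ0 hξ.2 hϱ0.le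
      have hξ2 : b ^ (2*ϱ) ≤ ξ ^ (2*ϱ) := rpow_le_rpow hb0.le hξ.1 hϱ0.le
      have hz0 : 0 ≤ t ^ α * (1 - ξ ^ (2*ϱ)) := mul_nonneg htpos (by linarith)
      have hnn := ML_nonneg α hα0 hz0
      have hle : ML α 1 (t ^ α * (1 - ξ ^ (2*ϱ))) ≤ D := by
        have h7 := ML_mono n hn α hα (w := t ^ α * (1 - b ^ (2*ϱ))) hz0 (by gcongr)
        have h5 := ML_upper n hn α (t * (1 - b ^ (2*ϱ)) ^ (1/α)) hα (by positivity)
        rw [hscale _ hw0.le] at h5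
        have h8 : (1 - b ^ (2*ϱ)) ^ (1/α) ≤ 1 - b ^ (2*ϱ) := by
          conv_rhs => rw [← rpow_one (1 - b ^ (2*ϱ))]
          apply rpow_le_rpow_of_exponent_ge hw0 _ hα1'
          have : 0 ≤ b ^ (2*ϱ) := by positivity
          linarith
        refine h7.trans (h5.trans ?_)
        rw [hD]; gcongr
      have hc := Real.neg_one_le_cos (x * ξ)
      simp only [hh]
      nlinarith
    have : 0 ≤ b * D := by positivity
    linarith
  have P4 : -(4 + 2 * (α * Gamma α)) ≤ ∫ ξ in (1:ℝ)..R, h ξ := by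
    set K := 4 + 2 * (α * Gamma α) with hK
    have hK0 : 0 < K := by positivity
    have hnot : (0:ℝ) ∉ Set.uIcc 1 R := by
      rw [Set.uIcc_of_le hR]; intro h0; linarith [h0.1]
    have e : ∫ ξ in (1:ℝ)..R, (-K) * ξ ^ (-2:ℤ) = (-K) * (1 - R⁻¹) := by
      rw [intervalIntegral.integral_const_mul, integral_zpow (by right; exact ⟨by norm_num, hnot⟩)]
      congr 1; norm_num; ring
    have e2 : ∫ ξ in (1:ℝ)..R, (-K) * ξ ^ (-2:ℤ) ≤ ∫ ξ in (1:ℝ)..R, h ξ := by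
      apply intervalIntegral.integral_mono_on_of_le_Ioo hR _ (hii _ _)
      · intro ξ hξ
        have hξ1 : 1 < ξ := hξ.1
        have hsq : ξ ^ 2 ≤ ξ ^ (2*ϱ) := by
          rw [← rpow_natCast]
          apply rpow_le_rpow_of_exponent_le hξ1.le
          push_cast; linarith
        have hta : 1 ≤ t ^ α := one_le_rpow ht1 hα0.le
        have hz : ξ^2 - 1 ≤ t ^ α * (ξ ^ (2*ϱ) - 1) := by
          have : 0 ≤ ξ ^ (2*ϱ) - 1 := by nlinarith
          nlinarith
        have hz0 : 0 < t ^ α * (ξ ^ (2*ϱ) - 1) := by nlinarith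
        obtain ⟨b1, b2, b3⟩ := ML_neg_bounds n hn α hα hα1 _ hz0
        rw [show -(t ^ α * (ξ ^ (2*ϱ) - 1)) = t ^ α * (1 - ξ ^ (2*ϱ)) by ring] at b1 b2 b3
        simp only [hh]
        set E := ML α 1 (t ^ α * (1 - ξ ^ (2*ϱ)))
        have hEK : E ≤ K * ξ ^ (-2:ℤ) := by
          rw [zpow_neg, ← div_eq_mul_inv, le_div_iff₀ (by positivity)]
          rw [show ξ ^ (2:ℤ) = ξ ^ 2 by norm_cast]
          have : E * (ξ^2 - 1) ≤ α * Gamma α := (mul_le_mul_of_nonneg_left hz b1).trans b3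
          have : 0 < α * Gamma α := by positivity
          rw [hK]; nlinarith
        have hc := Real.neg_one_le_cos (x * ξ)
        nlinarith
      · apply IntervalIntegrable.const_mul
        exact intervalIntegral.intervalIntegrable_zpow (Or.inr hnot)
    have : 0 ≤ K * R⁻¹ := by positivity
    linarith
  have s1 := intervalIntegral.integral_add_adjacent_intervals (hii 0 a) (hii a b)
  have s2 := intervalIntegral.integral_add_adjacent_intervals (hii 0 b) (hii b 1)
  have s3 := intervalIntegral.integral_add_adjacent_intervals (hii 0 1) (hii 1 R)
  linarith

lemma asymp (n : ℕ) (ϱ β m K p C : ℝ) (hϱ : 1 ≤ ϱ)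
    (hβ2 : β < 1 / (2 * ϱ)) (hm : 0 < m) (hp : 1/(2*ϱ) < p) :
    ∀ᶠ t : ℝ in atTop, C * t ^ (-p) * (3 * n * exp t) ≤
      (1/Real.pi) * (t ^ (-(1/(2*ϱ))) * (exp (t - n) / 6)
        - 3 * n * exp (t * (1 - (1/(m * t ^ β))^(2*ϱ))) - K) := by
  have hϱ0 : 0 < 2 * ϱ := by linarith
  set q := 1/(2*ϱ) with hq
  set δ := 1 - 2 * ϱ * β with hδ
  have hδ0 : 0 < δ := by
    rw [hq, lt_div_iff₀ hϱ0] at hβ2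
    linarith
  set c := m ^ (-(2*ϱ)) with hc
  have hc0 : 0 < c := by positivity
  have T1 : Tendsto (fun t : ℝ => t ^ q * exp (-c * t ^ δ)) atTop (𝓝 0) := by
    have h1 := (tendsto_rpow_mul_exp_neg_mul_atTop_nhds_zero (q/δ) c hc0).comp
      (tendsto_rpow_atTop hδ0)
    refine h1.congr' ?_
    filter_upwards [eventually_gt_atTop 0] with t ht
    simp only [Function.comp]
    rw [← rpow_mul ht.le, mul_div_cancel₀ _ hδ0.ne']
  have T2 : Tendsto (fun t : ℝ => t ^ q * exp (-1 * t)) atTop (𝓝 0) :=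
    tendsto_rpow_mul_exp_neg_mul_atTop_nhds_zero q 1 one_pos
  have T3 : Tendsto (fun t : ℝ => t ^ (-(p - q))) atTop (𝓝 0) :=
    tendsto_rpow_neg_atTop (by linarith)
  have T : Tendsto (fun t : ℝ => (1/Real.pi) * (exp (-(n:ℝ)) / 6 - 3 * n * (t ^ q * exp (-c * t ^ δ))
      - K * (t ^ q * exp (-1 * t))) - C * (3 * n) * t ^ (-(p-q))) atTop
      (𝓝 ((1/Real.pi) * (exp (-(n:ℝ)) / 6 - 3 * n * 0 - K * 0) - C * (3 * n) * 0)) :=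
    (((tendsto_const_nhds.sub (T1.const_mul _)).sub (T2.const_mul _)).const_mul _).sub
      (T3.const_mul _)
  have hlim : 0 < (1/Real.pi) * (exp (-(n:ℝ)) / 6 - 3 * n * 0 - K * 0) - C * (3 * n) * 0 := by
    simp only [mul_zero, sub_zero]
    have := Real.pi_pos
    positivity
  filter_upwards [T.eventually (lt_mem_nhds hlim), eventually_gt_atTop 0] with t h ht
  have hfac : 0 < t ^ (-q) * exp t := by positivity
  have h2 := mul_pos hfac h
  have x1 : t ^ (-q) * t ^ q = 1 := by rw [← rpow_add ht]; simp
  have x2 : t ^ (-q) * t ^ (-(p-q)) = t ^ (-p) := by rw [← rpow_add ht]; congr 1; ring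
  have x3 : exp t * exp (-1 * t) = 1 := by rw [← exp_add]; simp
  have x4 : exp (t - n) = exp t * exp (-(n:ℝ)) := by rw [← exp_add]; rfl
  have x5 : exp (t * (1 - (1/(m * t ^ β))^(2*ϱ))) = exp t * exp (-c * t ^ δ) := by
    rw [← exp_add]
    congr 1
    have : t * (1/(m * t ^ β))^(2*ϱ) = c * t ^ δ := by
      rw [one_div, inv_rpow (by positivity), ← rpow_neg (by positivity),
        mul_rpow hm.le (by positivity), ← rpow_mul ht.le, hδ, hc, sub_eq_add_neg, rpow_add ht,
        rpow_one]
      rw [show β * -(2*ϱ) = -(2*ϱ*β) by ring]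
      ring
    rw [mul_sub, this]; ring
  rw [x4, x5]
  have key : t ^ (-q) * exp t * ((1/Real.pi) * (exp (-(n:ℝ)) / 6 - 3 * n * (t ^ q * exp (-c * t ^ δ))
      - K * (t ^ q * exp (-1 * t))) - C * (3 * n) * t ^ (-(p-q))) =
      (1/Real.pi) * (t ^ (-q) * (exp t * exp (-(n:ℝ)) / 6)
        - 3 * n * (exp t * exp (-c * t ^ δ)) * (t ^ (-q) * t ^ q)
        - K * (t ^ (-q) * t ^ q) * (exp t * exp (-1*t)))
      - C * (t ^ (-q) * t ^ (-(p-q))) * (3 * n * exp t) := by ring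
  rw [key, x1, x2, x3, mul_one, mul_one, mul_one] at h2
  linarith

theorem stmt19 (n : ℕ) (hn : 2 ≤ n) (ϱ α β m ℓ : ℝ) (hϱ : 1 ≤ ϱ)
    (hα1 : 1 / (n : ℝ) ≤ α) (hα2 : α < 1)
    (hβ : β ∈ Set.Ioo (0 : ℝ) (1 / (2 * ϱ))) (hm : 0 < m)
    (hℓ : ℓ ∈ Set.Ioo (0 : ℝ) (Real.pi / 2)) (hℓeq : Real.cos ℓ = ℓ)
    (u : ℝ → ℝ → ℝ)
    (hu : ∀ t : ℝ, 0 < t → ∀ x : ℝ, 0 < x →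
      Tendsto (fun R : ℝ =>
          (1 / Real.pi) * ∫ ξ in (0 : ℝ)..R,
            ML α 1 (t ^ α * (1 - ξ ^ (2 * ϱ))) * Real.cos (x * ξ))
        atTop (nhds (u t x))) :
    (∃ ε : ℝ → ℝ, Tendsto ε atTop (nhds 0) ∧
      ∀ᶠ t : ℝ in atTop,
        u t (m * t ^ β) ≥
          (α * ℓ ^ (2 - 2 * ϱ) / (2 * ϱ)) * m ^ (2 * ϱ - 1) *
            t ^ (β * (2 * ϱ - 1) - α * n) * ML α 1 (t ^ α) * (1 - ε t)) ∧
    Tendsto (fun t : ℝ => u t (m * t ^ β)) atTop atTop := by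
  have hn0 : (0:ℝ) < n := by positivity
  have hα0 : 0 < α := lt_of_lt_of_le (by positivity) hα1
  have hϱ0 : 0 < 2 * ϱ := by linarith
  have hℓ0 : 0 < ℓ := hℓ.1
  set C := (α * ℓ ^ (2 - 2 * ϱ) / (2 * ϱ)) * m ^ (2 * ϱ - 1) with hC
  have hC0 : 0 < C := by positivity
  set p := -(β * (2 * ϱ - 1) - α * n) with hp
  have hpq : 1/(2*ϱ) < p := by
    have h1 : 1 ≤ α * n := by rwa [div_le_iff₀ hn0] at hα1
    have h2 : β * (2*ϱ - 1) < 1/(2*ϱ) * (2*ϱ-1) := by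
      apply mul_lt_mul_of_pos_right hβ.2; linarith
    have h3 : 1/(2*ϱ) * (2*ϱ-1) = 1 - 1/(2*ϱ) := by field_simp
    rw [hp]; linarith
  have hpe : β * (2 * ϱ - 1) - α * n = -p := by rw [hp, neg_neg]
  rw [hpe]
  have hx1 : ∀ᶠ t : ℝ in atTop, 1 < m * t ^ β :=
    ((tendsto_rpow_atTop hβ.1).const_mul_atTop hm).eventually_gt_atTop 1
  have hx2 : ∀ᶠ t : ℝ in atTop, t ^ (-(1/(2*ϱ))) ≤ 1 / (m * t ^ β) := by
    have h1 : Tendsto (fun t : ℝ => m * t ^ (-(1/(2*ϱ) - β))) atTop (𝓝 (m * 0)) :=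
      (tendsto_rpow_neg_atTop (by linarith [hβ.2])).const_mul m
    rw [mul_zero] at h1
    filter_upwards [h1.eventually (gt_mem_nhds one_pos), eventually_gt_atTop 0] with t h ht
    rw [le_div_iff₀ (by positivity)]
    have : t ^ (-(1/(2*ϱ))) * (m * t ^ β) = m * t ^ (-(1/(2*ϱ) - β)) := by
      rw [mul_left_comm, ← rpow_add ht]; congr 2; ring
    rw [this]; exact h.le
  have hmain : ∀ᶠ t : ℝ in atTop, C * t ^ (-p) * ML α 1 (t ^ α) ≤ u t (m * t ^ β) := by
    filter_upwards [asymp n ϱ β m (4 + 2 * (α * Gamma α)) p C hϱ hβ.2 hm hpq, hx1, hx2,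
      eventually_ge_atTop ((n:ℝ) + 1)] with t h1 h2 h3 h4
    have ht : 0 < t := by linarith
    refine le_trans ?_ (h1.trans ?_)
    · exact mul_le_mul_of_nonneg_left (ML_upper n hn α t hα1 ht) (by positivity)
    · refine ge_of_tendsto (hu t ht (m * t ^ β) (by positivity)) ?_
      filter_upwards [eventually_ge_atTop 1] with R hR
      apply mul_le_mul_of_nonneg_left _ (by have := Real.pi_pos; positivity)
      exact main_lower n hn α ϱ t (m * t ^ β) R hα1 hα2 hϱ h4 h2 h3 hR
  constructor
  · refine ⟨fun _ => 0, tendsto_const_nhds, ?_⟩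
    filter_upwards [hmain] with t ht
    simpa using ht
  · have h1 : Tendsto (fun t : ℝ => C / 3 * (exp t / t ^ p)) atTop atTop :=
      (tendsto_exp_div_rpow_atTop p).const_mul_atTop (by positivity)
    refine tendsto_atTop_mono' _ ?_ h1
    filter_upwards [hmain, eventually_ge_atTop 1] with t h ht
    refine le_trans ?_ h
    have ht0 : 0 < t := by linarith
    have h2 := ML_lower n hn α t hα1 hα2 ht
    calc C / 3 * (exp t / t ^ p) = C * t ^ (-p) * (exp t / 3) := by
          rw [rpow_neg ht0.le p]; ring
      _ ≤ _ := mul_le_mul_of_nonneg_left h2 (by positivity)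
end
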